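/- arXiv:2006.14671 — 3 statements merged into one kernel-verified Lean document; each statement's English description precedes it below -/
import Mathlib

section
/- Let n > 1 be an integer divisible only by primes congruent to 1 modulo 3, and let G = μ_n ⋊_χ μ_3 be a balanced semidirect product. Then there exist a number field K and an associative unital K-algebra A which is a division ring, has center equal to K, and has dimension 9 over K, such that the quotient group Aˣ/Kˣ contains a subgroup isomorphic to G. -/
/-- The central subgroup `Kˣ ⊆ Aˣ`: the units of `A` lying in the image of the structure map
`K → A`. -/
def centralUnits (K A : Type*) [Field K] [DivisionRing A] [Algebra K A] : Subgroup Aˣ :=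
  (Units.map (algebraMap K A).toMonoidHom).range

instance centralUnits_normal (K A : Type*) [Field K] [DivisionRing A] [Algebra K A] :
    (centralUnits K A).Normal := by
  constructor
  intro x hx g
  obtain ⟨k, hk⟩ := hx
  have hx' : (x : A) = algebraMap K A (k : K) := by rw [← hk]; rfl
  have h1 : g * x = x * g := by
    apply Units.ext
    rw [Units.val_mul, Units.val_mul, hx']
    exact (Algebra.commutes (k : K) (g : A)).symm
  have h2 : g * x * g⁻¹ = x := by rw [h1, mul_inv_cancel_right]
  rw [h2]
  exact ⟨k, hk⟩

/-- A central division algebra of dimension `9` over a number field `K`: the data of a number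
field `K` and an associative unital `K`-algebra `A` which is a division ring, has center equal
to `K`, and has dimension `9` over `K`. Such an algebra corresponds to a non-trivial
Severi–Brauer surface `S` over `K`, with `Aut(S) ≅ Aˣ/Kˣ`. -/
structure CentralDivAlg where
  K : Type
  A : Type
  [fieldK : Field K]
  [numberFieldK : NumberField K]
  [divisionRingA : DivisionRing A]
  [algebraKA : Algebra K A]
  center_eq_bot : Subalgebra.center K A = ⊥
  finrank_eq_nine : Module.finrank K A = 9

attribute [instance] CentralDivAlg.fieldK CentralDivAlg.numberFieldK
  CentralDivAlg.divisionRingA CentralDivAlg.algebraKA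

/-- The quotient group `Aˣ/Kˣ`, isomorphic to the automorphism group of the corresponding
Severi–Brauer surface. -/
abbrev CentralDivAlg.Q (D : CentralDivAlg) : Type := (D.A)ˣ ⧸ centralUnits D.K D.A

def zmodAction (n : ℕ) : (ZMod n)ˣ →* MulAut (Multiplicative (ZMod n)) where
  toFun u := AddEquiv.toMultiplicative (DistribMulAction.toAddAut (ZMod n)ˣ (ZMod n) u)
  map_one' := by ext t; simp
  map_mul' := by intro u v; ext t; simp [mul_smul]

def IsBalanced (n : ℕ) (χ : Multiplicative (ZMod 3) →* (ZMod n)ˣ) : Prop :=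
  ∀ p : ℕ, p.Prime → p ∣ n →
    Function.Injective
      ((Units.map (ZMod.castHom (Nat.ordProj_dvd n p)
        (ZMod (p ^ n.factorization p))).toMonoidHom).comp χ)

section TwistedNorm

/-- The reduced norm of `x + y u + z u²` in the cubic cyclic algebra with `u³ = q` and
`u a = σ(a) u`. -/
def twistedNorm {R : Type*} [CommRing R] (σ : R →+* R) (q x y z : R) : R :=
  x * σ x * σ (σ x) + q * (y * σ y * σ (σ y)) + q ^ 2 * (z * σ z * σ (σ z)) -
    q * (x * σ y * σ (σ z) + y * σ z * σ (σ x) + z * σ x * σ (σ y))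

lemma map_twistedNorm {R S : Type*} [CommRing R] [CommRing S] {σ : R →+* R} {τ : S →+* S}
    (j : R →+* S) (h : ∀ r, j (σ r) = τ (j r)) (q x y z : R) :
    j (twistedNorm σ q x y z) = twistedNorm τ (j q) (j x) (j y) (j z) := by
  simp [twistedNorm, h]

lemma twistedNorm_mul {R : Type*} [CommRing R] (σ : R →+* R) (q b x y z : R) :
    twistedNorm σ q (b * x) (b * y) (b * z) = b * σ b * σ (σ b) * twistedNorm σ q x y z := by
  simp only [twistedNorm, map_mul]
  ring

lemma Prime.dvd_of_dvd_mul_map {R : Type*} [CommRing R] {σ : R ≃+* R} {q : R}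
    (hq : Prime q) (hσ : σ q = q) {x : R} (h : q ∣ x * σ x * σ (σ x)) : q ∣ x := by
  have key (y : R) (hy : q ∣ σ y) : q ∣ y := by
    rwa [← hσ, map_dvd_iff] at hy
  rcases hq.dvd_or_dvd h with h | h
  · exact (hq.dvd_or_dvd h).elim id (key x)
  · exact key _ (key _ h)

variable {R : Type*} [CommRing R] [IsDomain R] {σ : R ≃+* R} {q : R}

lemma dvd_of_twistedNorm_eq_zero (hq : Prime q) (hσ : σ q = q) {x y z : R}
    (h : twistedNorm (σ : R →+* R) q x y z = 0) :
    ∃ x' y' z', x = q * x' ∧ y = q * y' ∧ z = q * z' := by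
  simp only [twistedNorm, RingEquiv.coe_toRingHom] at h
  obtain ⟨x, rfl⟩ : q ∣ x := hq.dvd_of_dvd_mul_map hσ
    ⟨-(y * σ y * σ (σ y)) - q * (z * σ z * σ (σ z)) +
      (x * σ y * σ (σ z) + y * σ z * σ (σ x) + z * σ x * σ (σ y)), by linear_combination h⟩
  simp only [map_mul, hσ] at h
  have h₁ : q ^ 2 * (x * σ x * σ (σ x)) + y * σ y * σ (σ y) + q * (z * σ z * σ (σ z)) -
      q * (x * σ y * σ (σ z) + y * σ z * σ (σ x) + z * σ x * σ (σ y)) = 0 :=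
    mul_left_cancel₀ hq.ne_zero (by linear_combination h)
  obtain ⟨y, rfl⟩ : q ∣ y := hq.dvd_of_dvd_mul_map hσ
    ⟨-q * (x * σ x * σ (σ x)) - z * σ z * σ (σ z) +
      (x * σ y * σ (σ z) + y * σ z * σ (σ x) + z * σ x * σ (σ y)), by linear_combination h₁⟩
  simp only [map_mul, hσ] at h₁
  have h₂ : q * (x * σ x * σ (σ x)) + q ^ 2 * (y * σ y * σ (σ y)) + z * σ z * σ (σ z) -
      q * (x * σ y * σ (σ z) + y * σ z * σ (σ x) + z * σ x * σ (σ y)) = 0 :=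
    mul_left_cancel₀ hq.ne_zero (by linear_combination h₁)
  obtain ⟨z, rfl⟩ : q ∣ z := hq.dvd_of_dvd_mul_map hσ
    ⟨-(x * σ x * σ (σ x)) - q * (y * σ y * σ (σ y)) +
      (x * σ y * σ (σ z) + y * σ z * σ (σ x) + z * σ x * σ (σ y)), by linear_combination h₂⟩
  exact ⟨x, y, z, rfl, rfl, rfl⟩

lemma pow_dvd_of_twistedNorm_eq_zero (hq : Prime q) (hσ : σ q = q) (m : ℕ) {x y z : R}
    (h : twistedNorm (σ : R →+* R) q x y z = 0) : q ^ m ∣ x ∧ q ^ m ∣ y ∧ q ^ m ∣ z := by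
  induction m generalizing x y z with
  | zero => simp
  | succ m ih =>
    obtain ⟨x, y, z, rfl, rfl, rfl⟩ := dvd_of_twistedNorm_eq_zero hq hσ h
    have hne : q * σ q * σ (σ q) ≠ 0 := by simp [hσ, hq.ne_zero]
    rw [twistedNorm_mul] at h
    obtain ⟨hx, hy, hz⟩ := ih ((mul_eq_zero.mp h).resolve_left hne)
    simp only [pow_succ']
    exact ⟨mul_dvd_mul_left q hx, mul_dvd_mul_left q hy, mul_dvd_mul_left q hz⟩

lemma eq_zero_of_twistedNorm_eq_zero [WfDvdMonoid R] (hq : Prime q) (hσ : σ q = q)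
    {x y z : R} (h : twistedNorm (σ : R →+* R) q x y z = 0) : x = 0 ∧ y = 0 ∧ z = 0 := by
  have key (a : R) (ha : ∀ m, q ^ m ∣ a) : a = 0 := by
    by_contra hne
    exact FiniteMultiplicity.not_iff_forall.mpr ha
      (FiniteMultiplicity.of_not_isUnit hq.not_isUnit hne)
  have hdvd m := pow_dvd_of_twistedNorm_eq_zero hq hσ m h
  exact ⟨key _ fun m ↦ (hdvd m).1, key _ fun m ↦ (hdvd m).2.1, key _ fun m ↦ (hdvd m).2.2⟩

lemma IsFractionRing.eq_zero_of_twistedNorm_eq_zero [WfDvdMonoid R] (hq : Prime q)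
    (hσ : σ q = q) {F : Type*} [Field F] [Algebra R F] [IsFractionRing R F] (τ : F →+* F)
    (hτ : ∀ r, algebraMap R F (σ r) = τ (algebraMap R F r)) {x y z : F}
    (h : twistedNorm τ (algebraMap R F q) x y z = 0) : x = 0 ∧ y = 0 ∧ z = 0 := by
  classical
  obtain ⟨b, hb⟩ := IsLocalization.exist_integer_multiples_of_finset (nonZeroDivisors R)
    ({x, y, z} : Finset F)
  simp only [Finset.mem_insert, Finset.mem_singleton, forall_eq_or_imp, forall_eq,
    Algebra.smul_def] at hb
  obtain ⟨⟨x', hx⟩, ⟨y', hy⟩, ⟨z', hz⟩⟩ := hb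
  have hb0 : algebraMap R F b ≠ 0 := by simp
  have h' : twistedNorm (σ : R →+* R) q x' y' z' = 0 := by
    apply IsFractionRing.injective R F
    rw [map_twistedNorm (algebraMap R F) (τ := τ) hτ, hx, hy, hz, twistedNorm_mul, h, mul_zero,
      map_zero]
  obtain ⟨rfl, rfl, rfl⟩ := _root_.eq_zero_of_twistedNorm_eq_zero hq hσ h'
  simpa [hb0, eq_comm] using And.intro hx (And.intro hy hz)

end TwistedNorm

section Cyclotomic

instance WittVector.instCharZero (p : ℕ) [Fact p.Prime] (k : Type*) [Field k] [CharP k p]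
    [PerfectRing k p] : CharZero (WittVector p k) := by
  refine charZero_of_inj_zero fun n hn ↦ ?_
  by_contra hne
  obtain ⟨e, m, hm, rfl⟩ := Nat.exists_eq_pow_mul_and_not_dvd hne p (Fact.out : p.Prime).ne_one
  push_cast at hn
  rcases mul_eq_zero.mp hn with h | h
  · exact absurd h (pow_ne_zero e (WittVector.irreducible p (k := k)).ne_zero)
  · apply hm
    rw [← CharP.cast_eq_zero_iff k p, ← map_natCast (WittVector.constantCoeff (p := p)), h, map_zero]

lemma IsPrimitiveRoot.exists_algHom {n : ℕ} [NeZero n] {L F : Type*} [Field L] [Field F]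
    [CharZero L] [CharZero F] [Algebra ℚ L] [Algebra ℚ F] [IsCyclotomicExtension {n} ℚ L]
    {ζ : L} (hζ : IsPrimitiveRoot ζ n) {θ : F} (hθ : IsPrimitiveRoot θ n) :
    ∃ j : L →ₐ[ℚ] F, j ζ = θ := by
  have h : Polynomial.aeval θ (minpoly ℚ (hζ.powerBasis ℚ).gen) = 0 := by
    rw [IsPrimitiveRoot.powerBasis_gen, ← hζ.minpoly_eq_cyclotomic_of_irreducible
      (Polynomial.cyclotomic.irreducible_rat (NeZero.pos n)), Polynomial.aeval_def,
      Polynomial.eval₂_eq_eval_map, Polynomial.map_cyclotomic]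
    exact hθ.isRoot_cyclotomic (NeZero.pos n)
  refine ⟨(hζ.powerBasis ℚ).lift θ h, ?_⟩
  have := (hζ.powerBasis ℚ).lift_gen θ h
  rwa [IsPrimitiveRoot.powerBasis_gen] at this

/-- If `σ` acts on `n`-th roots of unity as the Frobenius at `q`, then the norm form of the
cyclic algebra with parameter `q` is anisotropic: this can be checked over the fraction field of
the Witt vectors of an algebraic closure of `ZMod q`. -/
lemma IsPrimitiveRoot.eq_zero_of_twistedNorm_eq_zero {n q : ℕ} [NeZero n] [hq : Fact q.Prime]
    (hqn : ¬ q ∣ n) {L : Type*} [Field L] [CharZero L] [Algebra ℚ L]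
    [IsCyclotomicExtension {n} ℚ L] {ζ : L} (hζ : IsPrimitiveRoot ζ n) {σ : L →+* L}
    (hσ : σ ζ = ζ ^ q) {x y z : L} (h : twistedNorm σ q x y z = 0) :
    x = 0 ∧ y = 0 ∧ z = 0 := by
  let k := AlgebraicClosure (ZMod q)
  let W := WittVector q k
  let F := FractionRing W
  have : NeZero (n : k) := ⟨by rwa [Ne, CharP.cast_eq_zero_iff k q]⟩
  have : CharZero F := charZero_of_injective_algebraMap (IsFractionRing.injective W F)
  obtain ⟨t, ht⟩ := HasEnoughRootsOfUnity.exists_primitiveRoot k n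
  have hθ : IsPrimitiveRoot (algebraMap W F (WittVector.teichmuller q t)) n :=
    (ht.map_of_injective (f := WittVector.teichmuller q) fun a b hab ↦ by
      simpa using congrArg (WittVector.coeff · 0) hab).map_of_injective
      (IsFractionRing.injective W F)
  obtain ⟨j, hj⟩ := hζ.exists_algHom hθ
  let φ : W ≃+* W := WittVector.frobeniusEquiv q k
  let τ : F →+* F := (WittVector.FractionRing.frobenius q k : F →+* F)
  have hτ (r : W) : algebraMap W F (φ r) = τ (algebraMap W F r) :=
    (IsFractionRing.ringEquivOfRingEquiv_algebraMap _ _).symm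
  have hφt : φ (WittVector.teichmuller q t) = WittVector.teichmuller q t ^ q := by
    change WittVector.frobenius _ = _
    rw [WittVector.frobenius_eq_map_frobenius, WittVector.map_teichmuller, ← map_pow]
    rfl
  have hcomm (a : L) : j (σ a) = τ (j a) := by
    have : j.comp σ.toRatAlgHom = τ.toRatAlgHom.comp j := by
      apply (hζ.powerBasis ℚ).algHom_ext
      rw [IsPrimitiveRoot.powerBasis_gen]
      change j (σ ζ) = τ (j ζ)
      rw [hσ, map_pow, hj, ← hτ, hφt, map_pow]
    exact DFunLike.congr_fun this a
  have hj0 : twistedNorm τ (algebraMap W F (q : W)) (j x) (j y) (j z) = 0 := by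
    have := map_twistedNorm (j : L →+* F) (τ := τ) hcomm q x y z
    rw [h, map_zero, map_natCast] at this
    rw [map_natCast]
    exact this.symm
  simpa using IsFractionRing.eq_zero_of_twistedNorm_eq_zero (R := W) (σ := φ)
    (WittVector.irreducible q).prime (map_natCast φ q) τ hτ hj0

end Cyclotomic

section CyclicAlgebra

open Matrix

variable {K L : Type*} [Field K] [Field L] [Algebra K L]

/-- The matrix representing the generator `u` of a cubic cyclic algebra, with `u³ = q`. -/
def cyclicShift (L : Type*) [Field L] [Algebra K L] (q : K) : Matrix (Fin 3) (Fin 3) L :=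
  !![0, 1, 0; 0, 0, 1; algebraMap K L q, 0, 0]

/-- The cubic cyclic algebra `L ⊕ L u ⊕ L u²` with `u³ = q` and `u a = σ(a) u`, realised inside
the matrix algebra over `L` by Galois descent. -/
def cyclicAlgebra (σ : L ≃ₐ[K] L) (q : K) : Subalgebra K (Matrix (Fin 3) (Fin 3) L) where
  carrier := {M | cyclicShift L q * M = σ.mapMatrix M * cyclicShift L q}
  mul_mem' {M N} hM hN := by
    simp only [Set.mem_ofPred_eq, map_mul] at *
    rw [← mul_assoc, hM, mul_assoc, hN, mul_assoc]
  add_mem' {M N} hM hN := by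
    simp only [Set.mem_ofPred_eq, map_add] at *
    rw [mul_add, hM, hN, add_mul]
  algebraMap_mem' k := by
    simp only [Set.mem_ofPred_eq, AlgEquiv.commutes]
    exact (Algebra.commutes k _).symm

/-- The matrix of the element `x + y u + z u²` of a cubic cyclic algebra. -/
def cyclicMatrix (σ : L ≃ₐ[K] L) (q : K) (x y z : L) : Matrix (Fin 3) (Fin 3) L :=
  !![x, y, z;
    algebraMap K L q * σ z, σ x, σ y;
    algebraMap K L q * σ (σ y), algebraMap K L q * σ (σ z), σ (σ x)]

variable {σ : L ≃ₐ[K] L} {q : K}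

lemma cyclicMatrix_mem (hσ : ∀ a, σ (σ (σ a)) = a) (x y z : L) :
    cyclicMatrix σ q x y z ∈ cyclicAlgebra σ q := by
  change cyclicShift L q * _ = σ.mapMatrix _ * cyclicShift L q
  ext i j
  fin_cases i <;> fin_cases j <;>
    simp [cyclicShift, cyclicMatrix, Matrix.mul_apply, Fin.sum_univ_three, hσ, mul_comm]

lemma eq_cyclicMatrix {M : Matrix (Fin 3) (Fin 3) L} (hM : M ∈ cyclicAlgebra σ q) :
    M = cyclicMatrix σ q (M 0 0) (M 0 1) (M 0 2) := by
  have h (i j : Fin 3) := congrFun (congrFun (show cyclicShift L q * M =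
    σ.mapMatrix M * cyclicShift L q from hM) i) j
  simp only [cyclicShift, Matrix.mul_apply, Fin.sum_univ_three] at h
  have h00 := h 0 0
  have h01 := h 0 1
  have h02 := h 0 2
  have h10 := h 1 0
  have h11 := h 1 1
  have h12 := h 1 2
  simp at h00 h01 h02 h10 h11 h12
  ext i j
  fin_cases i <;> fin_cases j <;>
    simp [cyclicMatrix, h00, h01, h02, h10, h11, h12, mul_comm]

lemma det_cyclicMatrix (x y z : L) :
    (cyclicMatrix σ q x y z).det = twistedNorm (σ : L →+* L) (algebraMap K L q) x y z := by
  simp [cyclicMatrix, Matrix.det_fin_three, twistedNorm]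
  ring

lemma cyclicAlgebra_noZeroDivisors (h : ∀ x y z : L,
      twistedNorm (σ : L →+* L) (algebraMap K L q) x y z = 0 → x = 0 ∧ y = 0 ∧ z = 0) :
    NoZeroDivisors (cyclicAlgebra σ q) where
  eq_zero_or_eq_zero_of_mul_eq_zero := by
    have key (M : cyclicAlgebra σ q) (hM : M.1.det = 0) : M = 0 := by
      rw [eq_cyclicMatrix M.2, det_cyclicMatrix] at hM
      obtain ⟨hx, hy, hz⟩ := h _ _ _ hM
      apply Subtype.ext
      rw [eq_cyclicMatrix M.2, hx, hy, hz]
      ext i j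
      fin_cases i <;> fin_cases j <;> simp [cyclicMatrix]
    intro M N hMN
    have hdet : M.1.det * N.1.det = 0 := by
      rw [← Matrix.det_mul, ← Subalgebra.coe_mul, hMN]
      simp
    exact (mul_eq_zero.mp hdet).imp (key M) (key N)

/-- The coordinates of an element of a cubic cyclic algebra in the basis `1, u, u²`. -/
def cyclicAlgebraEquiv (hσ : ∀ a, σ (σ (σ a)) = a) : cyclicAlgebra σ q ≃ₗ[K] (Fin 3 → L) where
  toFun M := M.1 0
  map_add' _ _ := rfl
  map_smul' _ _ := rfl
  invFun v := ⟨cyclicMatrix σ q (v 0) (v 1) (v 2), cyclicMatrix_mem hσ _ _ _⟩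
  left_inv M := Subtype.ext (eq_cyclicMatrix M.2).symm
  right_inv v := by
    ext i
    fin_cases i <;> rfl

lemma finrank_cyclicAlgebra (hσ : ∀ a, σ (σ (σ a)) = a) (h : Module.finrank K L = 3) :
    Module.finrank K (cyclicAlgebra σ q) = 9 := by
  have : Module.Finite K L := Module.finite_of_finrank_pos (by simp [h])
  rw [(cyclicAlgebraEquiv hσ).finrank_eq, Module.finrank_pi_fintype]
  simp [h]

lemma center_cyclicAlgebra (hσ : ∀ a, σ (σ (σ a)) = a)
    (hfix : ∀ a, σ a = a → a ∈ (algebraMap K L).range) {a : L} (ha : σ a ≠ a) :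
    Subalgebra.center K (cyclicAlgebra σ q) = ⊥ := by
  refine eq_bot_iff.mpr fun M hM ↦ ?_
  rw [Subalgebra.mem_center_iff] at hM
  have hM1 := eq_cyclicMatrix M.2
  have hcomm (x y z : L) (i : Fin 3) := congrFun (congrFun
    (congrArg Subtype.val (hM ⟨_, cyclicMatrix_mem hσ x y z⟩)) 0) i
  simp only [Subalgebra.coe_mul] at hcomm
  rw [hM1] at hcomm
  have h1 := hcomm a 0 0 1
  have h2 := hcomm a 0 0 2
  have h3 := hcomm 0 1 0 1
  simp [cyclicMatrix, Matrix.mul_apply, Fin.sum_univ_three] at h1 h2 h3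
  have hy : M.1 0 1 = 0 := by
    by_contra hne
    exact ha (mul_left_cancel₀ hne (by linear_combination -h1))
  have hz : M.1 0 2 = 0 := by
    by_contra hne
    have h4 : σ (σ a) = a := mul_left_cancel₀ hne (by linear_combination -h2)
    exact ha (by rw [← h4, hσ, h4])
  obtain ⟨k, hk⟩ := hfix _ h3
  refine Algebra.mem_bot.mpr ⟨k, Subtype.ext ?_⟩
  rw [hM1, hy, hz, ← hk]
  ext i j
  fin_cases i <;> fin_cases j <;> simp [cyclicMatrix, Matrix.algebraMap_matrix_apply]

/-- The embedding of `L` in a cubic cyclic algebra. -/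
def cyclicDiag (hσ : ∀ a, σ (σ (σ a)) = a) : L →* cyclicAlgebra σ q where
  toFun a := ⟨cyclicMatrix σ q a 0 0, cyclicMatrix_mem hσ _ _ _⟩
  map_one' := by
    apply Subtype.ext
    ext i j
    fin_cases i <;> fin_cases j <;> simp [cyclicMatrix]
  map_mul' a b := by
    apply Subtype.ext
    ext i j
    fin_cases i <;> fin_cases j <;> simp [cyclicMatrix]

/-- The generator `u` of a cubic cyclic algebra. -/
def cyclicGen (hσ : ∀ a, σ (σ (σ a)) = a) : cyclicAlgebra σ q :=
  ⟨cyclicMatrix σ q 0 1 0, cyclicMatrix_mem hσ _ _ _⟩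

lemma cyclicGen_mul_cyclicDiag (hσ : ∀ a, σ (σ (σ a)) = a) (a : L) :
    (cyclicGen hσ : cyclicAlgebra σ q) * cyclicDiag hσ a = cyclicDiag hσ (σ a) * cyclicGen hσ := by
  apply Subtype.ext
  ext i j
  fin_cases i <;> fin_cases j <;>
    simp [cyclicDiag, cyclicGen, cyclicMatrix, hσ, Algebra.smul_def, mul_comm a]

lemma cyclicGen_pow_three (hσ : ∀ a, σ (σ (σ a)) = a) :
    (cyclicGen hσ : cyclicAlgebra σ q) ^ 3 = algebraMap K _ q := by
  apply Subtype.ext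
  ext i j
  fin_cases i <;> fin_cases j <;>
    simp [cyclicGen, cyclicMatrix, pow_succ, Algebra.algebraMap_eq_smul_one q]

lemma eq_zero_of_cyclicDiag_mul_cyclicGen_pow (hσ : ∀ a, σ (σ (σ a)) = a) {a : L} (ha : a ≠ 0)
    {j : ℕ} (hj : j < 3) {k : K}
    (h : (cyclicDiag hσ a * cyclicGen hσ ^ j : cyclicAlgebra σ q) = algebraMap K _ k) :
    j = 0 ∧ a = algebraMap K L k := by
  have h' (i : Fin 3) := congrFun (congrFun (congrArg Subtype.val h) 0) i
  have h0 := h' 0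
  have h1 := h' 1
  have h2 := h' 2
  interval_cases j <;>
    simp [cyclicDiag, cyclicGen, cyclicMatrix, pow_succ, Matrix.algebraMap_matrix_apply,
      ha] at h0 h1 h2
  exact ⟨rfl, h0⟩

end CyclicAlgebra

section Group

lemma exists_zmod_hom {H : Type*} [Group H] {n : ℕ} {h : H} (hn : h ^ n = 1) :
    ∃ F : Multiplicative (ZMod n) →* H, ∀ i : ℕ, F (Multiplicative.ofAdd (i : ZMod n)) = h ^ i := by
  refine ⟨AddMonoidHom.toMultiplicativeLeft (ZMod.lift n ⟨zmultiplesHom (Additive H)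
    (Additive.ofMul h), ?_⟩), fun i ↦ ?_⟩
  · simp [← ofMul_pow, hn]
  · have := ZMod.lift_coe n ⟨zmultiplesHom (Additive H) (Additive.ofMul h),
      by simp [← ofMul_pow, hn]⟩ i
    simp only [Int.cast_natCast] at this
    simp [this]

lemma exists_injective_semidirectProduct_hom {n : ℕ} [NeZero n]
    (χ : Multiplicative (ZMod 3) →* (ZMod n)ˣ) {H : Type*} [Group H] {e u : H}
    (he : e ^ n = 1) (hu : u ^ 3 = 1)
    (hue : u * e = e ^ (χ (Multiplicative.ofAdd 1) : ZMod n).val * u)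
    (hinj : ∀ i j : ℕ, j < 3 → e ^ i * u ^ j = 1 → n ∣ i ∧ j = 0) :
    ∃ f : Multiplicative (ZMod n) ⋊[(zmodAction n).comp χ] Multiplicative (ZMod 3) →* H,
      Function.Injective f := by
  obtain ⟨F, hF⟩ := exists_zmod_hom he
  obtain ⟨T, hT⟩ := exists_zmod_hom hu
  have hsurj (m : ℕ) [NeZero m] (g : Multiplicative (ZMod m)) :
      ∃ i < m, g = Multiplicative.ofAdd (i : ZMod m) :=
    ⟨g.toAdd.val, ZMod.val_lt _, by simp⟩
  have hT1 : T (Multiplicative.ofAdd 1) = u := by simpa using hT 1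
  have hgen : F.comp (zmodAction n (χ (Multiplicative.ofAdd 1))).toMonoidHom =
      (MulAut.conj u).toMonoidHom.comp F := by
    refine MonoidHom.ext fun t ↦ ?_
    obtain ⟨i, -, rfl⟩ := hsurj n t
    have h1 : zmodAction n (χ (Multiplicative.ofAdd 1)) (Multiplicative.ofAdd (i : ZMod n)) =
        Multiplicative.ofAdd
          ((((χ (Multiplicative.ofAdd 1) : ZMod n).val * i : ℕ)) : ZMod n) := by
      push_cast
      rw [ZMod.natCast_zmod_val]
      rfl
    have h2 : u * e * u⁻¹ = e ^ (χ (Multiplicative.ofAdd 1) : ZMod n).val := by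
      rw [hue, mul_inv_cancel_right]
    simp only [MonoidHom.comp_apply, MulEquiv.toMonoidHom_eq_coe, MonoidHom.coe_coe, h1, hF,
      MulAut.conj_apply]
    rw [← conj_pow, h2, pow_mul]
  have hcompat (g : Multiplicative (ZMod 3)) :
      F.comp (((zmodAction n).comp χ) g).toMonoidHom =
        (MulAut.conj (T g)).toMonoidHom.comp F := by
    obtain ⟨j, -, rfl⟩ := hsurj 3 g
    induction j with
    | zero =>
      ext
      simp
    | succ j ih =>
      have hsucc : Multiplicative.ofAdd ((j + 1 : ℕ) : ZMod 3) =
          Multiplicative.ofAdd 1 * Multiplicative.ofAdd (j : ZMod 3) := by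
        rw [← ofAdd_add, Nat.cast_succ, add_comm]
      refine MonoidHom.ext fun t ↦ ?_
      have h1 := DFunLike.congr_fun ih t
      have h2 := DFunLike.congr_fun hgen
        (zmodAction n (χ (Multiplicative.ofAdd (j : ZMod 3))) t)
      simp only [MonoidHom.comp_apply, MulEquiv.toMonoidHom_eq_coe, MonoidHom.coe_coe,
        MulAut.conj_apply] at h1 h2
      simp only [hsucc, MonoidHom.comp_apply, MulEquiv.toMonoidHom_eq_coe, MonoidHom.coe_coe,
        map_mul, MulAut.mul_apply, h2, h1, hT1, MulAut.conj_apply u,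
        MulAut.conj_apply (T _)]
  refine ⟨SemidirectProduct.lift F T hcompat, ?_⟩
  rw [injective_iff_map_eq_one]
  rintro ⟨a, b⟩ h
  obtain ⟨i, -, rfl⟩ := hsurj n a
  obtain ⟨j, hj, rfl⟩ := hsurj 3 b
  have h' : e ^ i * u ^ j = 1 := by
    rw [← hF, ← hT]
    exact h
  obtain ⟨hi, rfl⟩ := hinj i j hj h'
  rw [(ZMod.natCast_eq_zero_iff i n).mpr hi]
  rfl

lemma isUnit_sub_one_of_isBalanced {n : ℕ} (hn : 1 < n)
    (hdiv : ∀ p : ℕ, p.Prime → p ∣ n → p % 3 = 1)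
    {χ : Multiplicative (ZMod 3) →* (ZMod n)ˣ} (hχ : IsBalanced n χ) :
    IsUnit ((χ (Multiplicative.ofAdd 1) : ZMod n) - 1) := by
  have : NeZero n := ⟨by lia⟩
  set c : ZMod n := (χ (Multiplicative.ofAdd 1) : ZMod n) with hc
  have hc3 : c ^ 3 = 1 := by
    rw [hc, ← Units.val_pow_eq_pow_val, ← map_pow]
    have : (Multiplicative.ofAdd 1 : Multiplicative (ZMod 3)) ^ 3 = 1 := by decide
    rw [this, map_one, Units.val_one]
  obtain ⟨d, hd⟩ : ∃ d : ℕ, (d : ZMod n) = c - 1 := ⟨_, ZMod.natCast_zmod_val _⟩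
  rw [← hd, ZMod.isUnit_iff_coprime]
  refine Nat.coprime_of_dvd fun p hp hpd hpn ↦ ?_
  have hzero : (d * (d ^ 2 + 3 * d + 3) : ZMod n) = 0 := by
    rw [hd]
    linear_combination hc3
  have hdvd : p ^ n.factorization p ∣ d * (d ^ 2 + 3 * d + 3) := by
    refine (Nat.ordProj_dvd n p).trans ((ZMod.natCast_eq_zero_iff _ n).mp ?_)
    exact_mod_cast hzero
  have hcop : Nat.Coprime (p ^ n.factorization p) (d ^ 2 + 3 * d + 3) := by
    refine Nat.Coprime.pow_left _ ((Nat.Prime.coprime_iff_not_dvd hp).mpr fun h ↦ ?_)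
    have h3 : p ∣ 3 := by
      refine (Nat.dvd_add_right (?_ : p ∣ d ^ 2 + 3 * d)).mp h
      exact (dvd_pow hpd two_ne_zero).add (hpd.mul_left 3)
    have := hdiv p hp hpn
    rw [(Nat.prime_dvd_prime_iff_eq hp Nat.prime_three).mp h3] at this
    simp at this
  have hpd' : p ^ n.factorization p ∣ d := hcop.dvd_of_dvd_mul_right hdvd
  have : (Multiplicative.ofAdd 1 : Multiplicative (ZMod 3)) = 1 := by
    refine hχ p hp hpn (Units.ext (Eq.trans ?_ (congrArg Units.val (MonoidHom.map_one _)).symm))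
    change ZMod.castHom (Nat.ordProj_dvd n p) (ZMod (p ^ n.factorization p)) c = 1
    rw [← sub_eq_zero, ← map_one (ZMod.castHom (Nat.ordProj_dvd n p) _), ← map_sub, ← hd,
      map_natCast]
    exact (ZMod.natCast_eq_zero_iff _ _).mpr hpd'
  exact absurd this (by decide)


lemma exists_injective_semidirectProduct_hom_units {n : ℕ} [NeZero n]
    (χ : Multiplicative (ZMod 3) →* (ZMod n)ˣ) {K A : Type*} [Field K] [DivisionRing A]
    [Algebra K A] {e u : A} {q : K} (he0 : e ≠ 0) (hu0 : u ≠ 0) (he : e ^ n = 1)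
    (hu : u ^ 3 = algebraMap K A q)
    (hue : u * e = e ^ (χ (Multiplicative.ofAdd 1) : ZMod n).val * u)
    (hinj : ∀ i j : ℕ, j < 3 → ∀ k : K, e ^ i * u ^ j = algebraMap K A k → n ∣ i ∧ j = 0) :
    ∃ f : Multiplicative (ZMod n) ⋊[(zmodAction n).comp χ] Multiplicative (ZMod 3) →*
        Aˣ ⧸ centralUnits K A, Function.Injective f := by
  let π := QuotientGroup.mk' (centralUnits K A)
  refine exists_injective_semidirectProduct_hom χ (e := π (Units.mk0 e he0))
    (u := π (Units.mk0 u hu0)) ?_ ?_ ?_ fun i j hj h ↦ ?_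
  · have : Units.mk0 e he0 ^ n = 1 := Units.ext (by simpa using he)
    rw [← map_pow, this, map_one]
  · have hq : q ≠ 0 := by
      rintro rfl
      simp [hu0] at hu
    rw [← map_pow]
    refine (QuotientGroup.eq_one_iff _).mpr ⟨Units.mk0 q hq, Units.ext ?_⟩
    simpa using hu.symm
  · have : Units.mk0 u hu0 * Units.mk0 e he0 =
        Units.mk0 e he0 ^ (χ (Multiplicative.ofAdd 1) : ZMod n).val * Units.mk0 u hu0 :=
      Units.ext (by simpa using hue)
    rw [← map_pow, ← map_mul, this, map_mul]
  · rw [← map_pow, ← map_pow, ← map_mul] at h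
    obtain ⟨k, hk⟩ := (QuotientGroup.eq_one_iff _).mp h
    refine hinj i j hj k ?_
    simpa using (congrArg Units.val hk).symm

end Group

/-- A cubic cyclic algebra with anisotropic norm form, containing a suitable root of unity,
is a central division algebra whose projective unit group contains the semidirect product. -/
lemma exists_centralDivAlg_of_cyclic {n : ℕ} [NeZero n]
    (χ : Multiplicative (ZMod 3) →* (ZMod n)ˣ)
    (hχ : IsUnit ((χ (Multiplicative.ofAdd 1) : ZMod n) - 1)) (hn : 1 < n)
    {K L : Type} [Field K] [NumberField K] [Field L] [Algebra K L] {σ : L ≃ₐ[K] L} {q : K}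
    (hσ : ∀ a, σ (σ (σ a)) = a) (hfix : ∀ a, σ a = a → a ∈ (algebraMap K L).range)
    (hrank : Module.finrank K L = 3) (hq : ∀ x y z : L,
      twistedNorm (σ : L →+* L) (algebraMap K L q) x y z = 0 → x = 0 ∧ y = 0 ∧ z = 0)
    {ζ : L} (hζ : IsPrimitiveRoot ζ n)
    (hσζ : σ ζ = ζ ^ (χ (Multiplicative.ofAdd 1) : ZMod n).val) :
    ∃ (D : CentralDivAlg)
      (f : (Multiplicative (ZMod n) ⋊[(zmodAction n).comp χ] Multiplicative (ZMod 3)) →* D.Q),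
      Function.Injective f := by
  have hdvd (i : ℕ) (h : σ (ζ ^ i) = ζ ^ i) : n ∣ i := by
    rw [map_pow, hσζ, ← pow_mul,
      (isOfFinOrder_iff_pow_eq_one.mpr ⟨n, NeZero.pos n, hζ.pow_eq_one⟩).pow_eq_pow_iff_modEq,
      ← hζ.eq_orderOf, ← ZMod.natCast_eq_natCast_iff,
      Nat.cast_mul, ZMod.natCast_zmod_val] at h
    rw [← ZMod.natCast_eq_zero_iff]
    exact hχ.mul_right_eq_zero.mp (by linear_combination h)
  have hne : σ ζ ≠ ζ := fun h ↦ by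
    have := hdvd 1 (by simpa using h)
    exact hn.ne' (Nat.dvd_one.mp this)
  have hζ0 : ζ ≠ 0 := hζ.ne_zero (NeZero.ne n)
  have := cyclicAlgebra_noZeroDivisors hq
  have : IsDomain (cyclicAlgebra σ q) := NoZeroDivisors.to_isDomain _
  have hrank' := finrank_cyclicAlgebra (q := q) hσ hrank
  have : FiniteDimensional K (cyclicAlgebra σ q) :=
    Module.finite_of_finrank_pos (by simp [hrank'])
  let _ := divisionRingOfFiniteDimensional K (cyclicAlgebra σ q)
  have he0 : (cyclicDiag hσ ζ : cyclicAlgebra σ q) ≠ 0 := fun h ↦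
    hζ0 (congrFun (congrFun (congrArg Subtype.val h) 0) 0)
  have hu0 : (cyclicGen hσ : cyclicAlgebra σ q) ≠ 0 := fun h ↦
    one_ne_zero (α := L) (congrFun (congrFun (congrArg Subtype.val h) 0) 1)
  obtain ⟨f, hf⟩ := exists_injective_semidirectProduct_hom_units χ he0 hu0
    (by rw [← map_pow, hζ.pow_eq_one, map_one]) (cyclicGen_pow_three hσ)
    (by rw [cyclicGen_mul_cyclicDiag, hσζ, map_pow]) fun i j hj k h ↦ by
      rw [← map_pow] at h
      obtain ⟨h0, hk⟩ := eq_zero_of_cyclicDiag_mul_cyclicGen_pow hσ (pow_ne_zero i hζ0) hj h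
      exact ⟨hdvd i (by rw [hk, AlgEquiv.commutes]), h0⟩
  exact ⟨{ K := K
           A := cyclicAlgebra σ q
           center_eq_bot := center_cyclicAlgebra hσ hfix hne
           finrank_eq_nine := hrank' }, f, hf⟩

/-- The semidirect product embeds in the projective unit group of the cyclic algebra over a
subfield of the `n`-th cyclotomic field whose parameter is a prime congruent to the value of
`χ`. -/
lemma exists_centralDivAlg_of_cyclotomic {n : ℕ} [NeZero n] (hn : 1 < n)
    (χ : Multiplicative (ZMod 3) →* (ZMod n)ˣ)
    (hχ : IsUnit ((χ (Multiplicative.ofAdd 1) : ZMod n) - 1))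
    (L : Type) [Field L] [NumberField L] [IsCyclotomicExtension {n} ℚ L] :
    ∃ (D : CentralDivAlg)
      (f : (Multiplicative (ZMod n) ⋊[(zmodAction n).comp χ] Multiplicative (ZMod 3)) →* D.Q),
      Function.Injective f := by
  set c : (ZMod n)ˣ := χ (Multiplicative.ofAdd 1) with hc
  obtain ⟨q, hqn, hq, hqc⟩ := Nat.forall_exists_prime_gt_and_eq_mod c.isUnit n
  have : Fact q.Prime := ⟨hq⟩
  let ζ : L := IsCyclotomicExtension.zeta n ℚ L
  have hζ : IsPrimitiveRoot ζ n := IsCyclotomicExtension.zeta_spec n ℚ L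
  let Φ := IsCyclotomicExtension.autEquivPow L
    (Polynomial.cyclotomic.irreducible_rat (NeZero.pos n))
  let σ : L ≃ₐ[ℚ] L := Φ.symm c
  have hΦσ : Φ σ = c := Φ.apply_symm_apply c
  have hσζ : σ ζ = ζ ^ (c : ZMod n).val := by
    rw [← hΦσ]
    exact (hζ.autToPow_spec ℚ σ).symm
  have hσq : σ ζ = ζ ^ q := by
    rw [hσζ, ← hqc, ZMod.val_natCast, hζ.eq_orderOf, pow_mod_orderOf]
  have hσ3 : σ ^ 3 = 1 := by
    rw [← map_pow Φ.symm, hc, ← map_pow]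
    have : (Multiplicative.ofAdd 1 : Multiplicative (ZMod 3)) ^ 3 = 1 := by decide
    rw [this, map_one, map_one]
  have hσ1 : σ ≠ 1 := by
    intro h
    have : Nontrivial (ZMod n) := ZMod.nontrivial_iff.mpr hn.ne'
    rw [← hΦσ, h, map_one] at hχ
    simp at hχ
  let H := Subgroup.zpowers σ
  let K := IntermediateField.fixedField H
  have hrank : Module.finrank K L = 3 := by
    rw [IntermediateField.finrank_fixedField_eq_card, Nat.card_zpowers]
    exact orderOf_eq_prime hσ3 hσ1
  let τ : L ≃ₐ[K] L := IntermediateField.fixingSubgroupEquiv K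
    ⟨σ, (IntermediateField.le_iff_le H K).mp le_rfl (Subgroup.mem_zpowers σ)⟩
  have hτ (a : L) : τ a = σ a := rfl
  refine exists_centralDivAlg_of_cyclic χ hχ hn (K := K) (L := L) (σ := τ) (q := (q : K))
    (fun a ↦ DFunLike.congr_fun hσ3 a) (fun a ha ↦ ?_) hrank (fun x y z h ↦ ?_) hζ hσζ
  · refine ⟨⟨a, (IntermediateField.mem_fixedField_iff H a).mpr fun f hf ↦ ?_⟩, rfl⟩
    have : H ≤ MulAction.stabilizer (L ≃ₐ[ℚ] L) a := by
      rw [Subgroup.zpowers_le]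
      exact ha
    exact this hf
  · rw [map_natCast] at h
    exact hζ.eq_zero_of_twistedNorm_eq_zero (Nat.not_dvd_of_pos_of_lt (NeZero.pos n) hqn) hσq h

/-- Let `n > 1` be an integer divisible only by primes congruent to `1` modulo `3`, and let
`G = μ_n ⋊_χ μ₃` be a balanced semidirect product. Then there exist a number field `K` and a
central division algebra `A` of dimension `9` over `K` (corresponding to a non-trivial
Severi–Brauer surface) such that the quotient group `Aˣ/Kˣ` contains a subgroup isomorphic
to `G`. -/
theorem stmt_7 (n : ℕ) (hn : 1 < n) (hdiv : ∀ p : ℕ, p.Prime → p ∣ n → p % 3 = 1)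
    (χ : Multiplicative (ZMod 3) →* (ZMod n)ˣ) (hχ : IsBalanced n χ) :
    ∃ (D : CentralDivAlg)
      (f : (Multiplicative (ZMod n) ⋊[(zmodAction n).comp χ] Multiplicative (ZMod 3)) →* D.Q),
      Function.Injective f := by
  have : NeZero n := ⟨by lia⟩
  have : IsCyclotomicExtension {n} ℚ (CyclotomicField n ℚ) := by
    convert CyclotomicField.isCyclotomicExtension n ℚ
    · rfl
    · exact Subsingleton.elim _ _
  exact exists_centralDivAlg_of_cyclotomic hn χ (isUnit_sub_one_of_isBalanced hn hdiv hχ)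
    (CyclotomicField n ℚ)
end

section
/- Let n ≥ 1 be an integer divisible only by primes congruent to 1 modulo 3, let G' = μ_n ⋊_χ μ_3 be a balanced semidirect product, and let G = μ_3 × G'. Then there exist a number field K and an associative unital K-algebra A which is a division ring, has center equal to K, and has dimension 9 over K, such that the quotient group Aˣ/Kˣ contains a subgroup isomorphic to G. -/
open WithZero IsDedekindDomain in
theorem IsDedekindDomain.HeightOneSpectrum.intValuation_map_le_of_le_comap {R : Type*} [CommRing R]
    [IsDedekindDomain R] (v : HeightOneSpectrum R) (e : R →+* R)
    (h : v.asIdeal ≤ v.asIdeal.comap e) (x : R) : v.intValuation (e x) ≤ v.intValuation x := by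
  rcases eq_or_ne x 0 with rfl | hx
  · simp
  rw [v.intValuation_if_neg hx, v.intValuation_le_pow_iff_mem]
  refine (Ideal.pow_right_mono h _).trans (Ideal.le_comap_pow e _) ?_
  rw [← v.intValuation_le_pow_iff_mem, v.intValuation_if_neg hx]

open WithZero IsDedekindDomain in
theorem IsDedekindDomain.HeightOneSpectrum.intValuation_map_of_comap_eq {R : Type*} [CommRing R]
    [IsDedekindDomain R] (v : HeightOneSpectrum R) (e : R ≃+* R)
    (h : v.asIdeal.comap (e : R →+* R) = v.asIdeal) (x : R) :
    v.intValuation (e x) = v.intValuation x := by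
  refine le_antisymm (v.intValuation_map_le_of_le_comap (e : R →+* R) h.ge x) ?_
  have := v.intValuation_map_le_of_le_comap (e.symm : R →+* R) (fun y hy ↦ ?_) (e x)
  · simpa using this
  · rw [← h, Ideal.mem_comap, Ideal.mem_comap]
    simpa using hy

open WithZero IsDedekindDomain NumberField in
theorem exists_frobenius_and_valuation (L : Type*) [Field L] [NumberField L] (N q : ℕ) [NeZero N]
    [IsCyclotomicExtension {N} ℚ L] (hq : q.Prime) (hqN : ¬ q ∣ N) :
    ∃ (σ : Gal(L/ℚ)) (v : Valuation L ℤᵐ⁰), (∀ x, v (σ x) = v x) ∧ v (q : L) = exp (-1 : ℤ) ∧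
      ∀ ζ : L, ζ ^ N = 1 → σ ζ = ζ ^ q := by
  have : IsGalois ℚ L := IsCyclotomicExtension.isGalois {N} ℚ L
  have : Fact q.Prime := ⟨hq⟩
  have hq0 : (q : ℤ) ≠ 0 := mod_cast hq.ne_zero
  let w : HeightOneSpectrum ℤ := ⟨Ideal.span {(q : ℤ)},
    (Ideal.span_singleton_prime hq0).2 (Nat.prime_iff_prime_int.1 hq), by simpa using hq0⟩
  have : w.asIdeal.IsMaximal := w.isMaximal
  obtain ⟨P, hP, hPl⟩ :=
    Ideal.exists_maximal_ideal_liesOver_of_isIntegral (S := 𝓞 L) w.asIdeal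
  have hPl' : P.LiesOver (Ideal.span {(q : ℤ)}) := hPl
  have hPp : P.IsPrime := hP.isPrime
  let v : HeightOneSpectrum (𝓞 L) := ⟨P, hPp, Ideal.ne_bot_of_liesOver_of_ne_bot w.ne_bot P⟩
  have hvl : v.asIdeal.LiesOver w.asIdeal := hPl
  have : Finite (𝓞 L ⧸ P) := Ideal.finiteQuotientOfFreeOfNeBot P v.ne_bot
  obtain ⟨σ, hσ⟩ := IsArithFrobAt.exists_of_isInvariant ℤ Gal(L/ℚ) P
  have hcoe (x : 𝓞 L) : ((σ • x : 𝓞 L) : L) = σ x := rfl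
  refine ⟨σ, v.valuation L, fun x ↦ ?_, ?_, fun ζ hζ ↦ ?_⟩
  · have key (y : 𝓞 L) : v.valuation L (σ y) = v.valuation L y := by
      rw [← hcoe, v.valuation_of_algebraMap, v.valuation_of_algebraMap]
      exact v.intValuation_map_of_comap_eq (MulSemiringAction.toRingEquiv _ (𝓞 L) σ) hσ.comap_eq y
    obtain ⟨a, b, hb, rfl⟩ := IsFractionRing.div_surjective (A := 𝓞 L) x
    rw [map_div₀, map_div₀, map_div₀]
    exact congrArg₂ _ (key a) (key b)
  · have h1 : w.asIdeal.ramificationIdx' v.asIdeal = 1 :=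
      (Ideal.ramificationIdx'_eq_ramificationIdx _ _ w.ne_bot).trans
        (IsCyclotomicExtension.Rat.ramificationIdx_eq_of_not_dvd q L P (m := N) hqN)
    have h2 := HeightOneSpectrum.intValuation_liesOver w v (q : ℤ)
    rw [h1, pow_one, w.intValuation_singleton hq0 rfl] at h2
    rw [h2, ← v.valuation_of_algebraMap (K := L)]
    simp
  · let z : 𝓞 L := ⟨ζ, (show IsIntegral ℤ ζ from .of_pow (NeZero.pos N) (hζ ▸ isIntegral_one))⟩
    have hNP : (N : 𝓞 L) ∉ P := by
      intro h
      have : (N : ℤ) ∈ P.under ℤ := by simpa [Ideal.mem_comap] using h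
      rw [← hPl'.over, Ideal.mem_span_singleton] at this
      exact hqN (mod_cast this)
    have hcard : Nat.card (ℤ ⧸ P.under ℤ) = q := by
      rw [← hPl'.over, Nat.card_congr (Int.quotientSpanNatEquivZMod q).toEquiv, Nat.card_zmod]
    have := hσ.apply_of_pow_eq_one (ζ := z) (m := N) (RingOfIntegers.ext hζ) hNP
    rw [hcard] at this
    exact congrArg (algebraMap (𝓞 L) L) this

open WithZero in
theorem WithZero.eq_zero_of_pow_three_eq_exp_mul {α β : ℤᵐ⁰} {k : ℤ} (hk : ¬ 3 ∣ k)
    (h : α ^ 3 = exp k * β ^ 3) : β = 0 := by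
  by_contra hβ
  have hα : α ≠ 0 := by rintro rfl; simp [hβ] at h
  have := congrArg log h
  rw [log_mul (by simp) (pow_ne_zero _ hβ), log_pow, log_pow, log_exp] at this
  simp only [nsmul_eq_mul, Nat.cast_ofNat] at this
  omega

open WithZero in
theorem Valuation.add_ne_zero_of_pow_three {L : Type*} [Field L] (v : Valuation L ℤᵐ⁰)
    {s₀ s₁ s₂ s₃ : L} {α β γ : ℤᵐ⁰} (h₀ : v s₀ = α ^ 3) (h₁ : v s₁ = exp (-1) * β ^ 3)
    (h₂ : v s₂ = exp (-1) ^ 2 * γ ^ 3) (h₃ : v s₃ ≤ exp (-1) * (α * β * γ))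
    (h : s₀ + s₁ + s₂ + s₃ = 0) : α = 0 ∧ β = 0 ∧ γ = 0 := by
  have hcube : (exp (-1 : ℤ) * (α * β * γ)) ^ 3 = v s₀ * v s₁ * v s₂ := by
    rw [h₀, h₁, h₂, mul_pow, mul_pow, mul_pow, pow_succ' _ 2]; ac_rfl
  have key {x y z : L} (hs : x + y + z + s₃ = 0) (hv : v x * v y * v z = v s₀ * v s₁ * v s₂)
      (hy : v y < v x) (hz : v z < v x) : False := by
    have hx : 0 < v x := zero_le.trans_lt hy
    have h₃' : v s₃ < v x := by
      refine h₃.trans_lt (lt_of_pow_lt_pow_left₀ 3 zero_le ?_)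
      rw [hcube, ← hv, pow_succ, pow_two, mul_assoc, mul_assoc]
      exact mul_lt_mul_of_pos_left (mul_lt_mul'' hy hz zero_le zero_le) hx
    have hlt : v (y + z + s₃) < v x := v.map_add_lt (v.map_add_lt hy hz) h₃'
    have : v (y + z + s₃) = v x := by
      rw [← v.map_neg x]
      exact congrArg v (by linear_combination hs)
    exact hlt.ne this
  have hexp : (exp (-1 : ℤ)) ≠ 0 := exp_ne_zero
  have e01 : v s₀ = v s₁ → β = 0 := fun e ↦
    eq_zero_of_pow_three_eq_exp_mul (k := -1) (by decide) (by rw [← h₀, e, h₁])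
  have e02 : v s₀ = v s₂ → γ = 0 := fun e ↦
    eq_zero_of_pow_three_eq_exp_mul (k := -2) (by decide) (by rw [← h₀, e, h₂, ← exp_nsmul]; rfl)
  have e12 : v s₁ = v s₂ → γ = 0 := fun e ↦ by
    refine eq_zero_of_pow_three_eq_exp_mul (α := β) (k := -1) (by decide) ?_
    rw [h₁, h₂, pow_two, mul_assoc] at e
    exact mul_left_cancel₀ hexp e
  have z0 : v s₀ = 0 ↔ α = 0 := by rw [h₀]; simp
  have z1 : v s₁ = 0 ↔ β = 0 := by rw [h₁]; simp
  have z2 : v s₂ = 0 ↔ γ = 0 := by rw [h₂]; simp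
  have k0 := key (x := s₀) (y := s₁) (z := s₂) h rfl
  have k1 := key (x := s₁) (y := s₀) (z := s₂) (by rw [← h]; ring) (by ac_rfl)
  have k2 := key (x := s₂) (y := s₀) (z := s₁) (by rw [← h]; ring) (by ac_rfl)
  have p0 : v s₀ ≠ 0 → 0 < v s₀ := zero_lt_iff.2
  have p1 : v s₁ ≠ 0 → 0 < v s₁ := zero_lt_iff.2
  have p2 : v s₂ ≠ 0 → 0 < v s₂ := zero_lt_iff.2
  have q0 := lt_trichotomy (v s₀) (v s₁)
  have q1 := lt_trichotomy (v s₀) (v s₂)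
  have q2 := lt_trichotomy (v s₁) (v s₂)
  clear h h₀ h₁ h₂ h₃ hcube key hexp
  generalize v s₀ = A at *
  generalize v s₁ = B at *
  generalize v s₂ = C at *
  grind

/-- A matrix `Y` with `Y ^ 3 = a`. -/
def cubicShift {L : Type*} [Field L] (a : L) : Matrix (Fin 3) (Fin 3) L :=
  !![0, 1, 0; 0, 0, 1; a, 0, 0]

/-- The cyclic algebra `(L/K, σ, a)` of degree `3`, realized as an algebra of matrices over `L`. -/
def cubicCyclicAlgebra {K L : Type*} [Field K] [Field L] [Algebra K L] (σ : Gal(L/K)) (a : L) :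
    Subalgebra K (Matrix (Fin 3) (Fin 3) L) where
  carrier := {M | cubicShift a * M = σ.mapMatrix M * cubicShift a}
  mul_mem' {M N} hM hN := by
    simp only [Set.mem_ofPred_eq] at hM hN ⊢
    rw [map_mul, ← mul_assoc, hM, mul_assoc, hN, mul_assoc]
  add_mem' {M N} hM hN := by
    simp only [Set.mem_ofPred_eq] at hM hN ⊢
    rw [map_add, mul_add, hM, hN, add_mul]
  algebraMap_mem' k := by
    simp only [Set.mem_ofPred_eq, AlgEquiv.commutes]
    exact (Algebra.commutes k _).symm

namespace cubicCyclicAlgebra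

variable {K L : Type*} [Field K] [Field L] [Algebra K L] {σ : Gal(L/K)} {a : L}

theorem mem_iff {M : Matrix (Fin 3) (Fin 3) L} :
    M ∈ cubicCyclicAlgebra σ a ↔ cubicShift a * M = σ.mapMatrix M * cubicShift a :=
  Iff.rfl

/-- The matrix with first row `x` in the cyclic algebra `(L/K, σ, a)`. -/
def matrixOfRow (σ : Gal(L/K)) (a : L) (x : Fin 3 → L) : Matrix (Fin 3) (Fin 3) L :=
  !![x 0, x 1, x 2; a * σ (x 2), σ (x 0), σ (x 1); a * σ (σ (x 1)), a * σ (σ (x 2)), σ (σ (x 0))]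

theorem matrixOfRow_mem (hσ : ∀ x, σ (σ (σ x)) = x) (ha : σ a = a) (x : Fin 3 → L) :
    matrixOfRow σ a x ∈ cubicCyclicAlgebra σ a := by
  rw [mem_iff]
  ext i j
  fin_cases i <;> fin_cases j <;>
    simp [matrixOfRow, cubicShift, Matrix.mul_apply, Fin.sum_univ_three, hσ, ha, mul_comm]

theorem eq_matrixOfRow (ha : σ a = a) {M : Matrix (Fin 3) (Fin 3) L}
    (hM : M ∈ cubicCyclicAlgebra σ a) : M = matrixOfRow σ a (M 0) := by
  rw [mem_iff] at hM
  have h (i j) := congrFun (congrFun hM i) j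
  have h0 (j) := h 0 j
  have h1 (j) := h 1 j
  simp only [Fin.forall_fin_succ, cubicShift, Matrix.mul_apply, Fin.sum_univ_three] at h0 h1
  simp at h0 h1
  obtain ⟨h00, h01, h02⟩ := h0
  obtain ⟨h10, h11, h12⟩ := h1
  ext i j
  fin_cases i <;> fin_cases j <;>
    simp [matrixOfRow, *, mul_comm]

/-- The cyclic algebra `(L/K, σ, a)` is isomorphic to `L ^ 3` as a vector space. -/
def rowEquiv (hσ : ∀ x, σ (σ (σ x)) = x) (ha : σ a = a) :
    cubicCyclicAlgebra σ a ≃ₗ[K] (Fin 3 → L) where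
  toFun M := (M : Matrix (Fin 3) (Fin 3) L) 0
  map_add' _ _ := rfl
  map_smul' _ _ := rfl
  invFun x := ⟨matrixOfRow σ a x, matrixOfRow_mem hσ ha x⟩
  left_inv M := Subtype.ext (eq_matrixOfRow ha M.2).symm
  right_inv x := by ext i; fin_cases i <;> rfl

theorem finrank_eq_nine [FiniteDimensional K L] (hσ : ∀ x, σ (σ (σ x)) = x) (ha : σ a = a)
    (h3 : Module.finrank K L = 3) : Module.finrank K (cubicCyclicAlgebra σ a) = 9 := by
  rw [(rowEquiv hσ ha).finrank_eq, Module.finrank_pi_fintype]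
  simp [h3]

theorem row_mul (ha : σ a = a) (M N : cubicCyclicAlgebra σ a) :
    (M * N : cubicCyclicAlgebra σ a).1 0 = ![
      M.1 0 0 * N.1 0 0 + a * (M.1 0 1 * σ (N.1 0 2)) + a * (M.1 0 2 * σ (σ (N.1 0 1))),
      M.1 0 0 * N.1 0 1 + M.1 0 1 * σ (N.1 0 0) + a * (M.1 0 2 * σ (σ (N.1 0 2))),
      M.1 0 0 * N.1 0 2 + M.1 0 1 * σ (N.1 0 1) + M.1 0 2 * σ (σ (N.1 0 0))] := by
  ext j
  rw [MulMemClass.coe_mul, Matrix.mul_apply]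
  conv_lhs => rw [eq_matrixOfRow ha N.2]
  fin_cases j <;> simp [matrixOfRow, Fin.sum_univ_three] <;> ring

theorem ext_row (ha : σ a = a) {M N : cubicCyclicAlgebra σ a} (h0 : M.1 0 0 = N.1 0 0)
    (h1 : M.1 0 1 = N.1 0 1) (h2 : M.1 0 2 = N.1 0 2) : M = N := by
  apply Subtype.ext
  rw [eq_matrixOfRow ha M.2, eq_matrixOfRow ha N.2]
  congr 1
  ext j
  fin_cases j <;> assumption

theorem det_matrixOfRow (x : Fin 3 → L) : (matrixOfRow σ a x).det =
    x 0 * σ (x 0) * σ (σ (x 0)) + a * (x 1 * σ (x 1) * σ (σ (x 1))) +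
      a ^ 2 * (x 2 * σ (x 2) * σ (σ (x 2))) +
      (-a) * (x 0 * σ (x 1) * σ (σ (x 2)) + x 1 * σ (x 2) * σ (σ (x 0)) +
        x 2 * σ (x 0) * σ (σ (x 1))) := by
  rw [Matrix.det_fin_three]
  simp [matrixOfRow]
  ring

theorem noZeroDivisors_of_valuation (ha : σ a = a) (v : Valuation L (WithZero (Multiplicative ℤ)))
    (hv : ∀ x, v (σ x) = v x) (hva : v a = WithZero.exp (-1)) :
    NoZeroDivisors (cubicCyclicAlgebra σ a) := by
  have hdet (M : cubicCyclicAlgebra σ a) (h : M.1.det = 0) : M = 0 := by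
    rw [eq_matrixOfRow ha M.2, det_matrixOfRow] at h
    have := v.add_ne_zero_of_pow_three (α := v (M.1 0 0)) (β := v (M.1 0 1)) (γ := v (M.1 0 2))
      (by simp [hv, pow_succ]) (by simp [hv, hva, pow_succ]) (by simp [hv, hva, pow_succ]) ?_ h
    · simp only [v.zero_iff] at this
      exact ext_row ha this.1 this.2.1 this.2.2
    · rw [map_mul, v.map_neg, hva]
      refine mul_le_mul_right (v.map_add_le (v.map_add_le ?_ ?_) ?_) _ <;>
        simp only [map_mul, hv] <;> exact le_of_eq (by ac_rfl)
  refine ⟨fun {M N} h ↦ ?_⟩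
  have h' : M.1.det * N.1.det = 0 := by
    rw [← Matrix.det_mul, ← MulMemClass.coe_mul, h]
    simp
  exact (mul_eq_zero.1 h').imp (hdet M) (hdet N)

/-- The embedding of `L` into the cyclic algebra `(L/K, σ, a)`. -/
def diag (hσ : ∀ x, σ (σ (σ x)) = x) (ha : σ a = a) : L →ₐ[K] cubicCyclicAlgebra σ a where
  toFun x := ⟨matrixOfRow σ a ![x, 0, 0], matrixOfRow_mem hσ ha _⟩
  map_one' := ext_row ha (by simp [matrixOfRow]) (by simp [matrixOfRow]) (by simp [matrixOfRow])
  map_zero' := ext_row ha (by simp [matrixOfRow]) (by simp [matrixOfRow]) (by simp [matrixOfRow])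
  map_mul' x y := by
    apply ext_row ha <;> rw [row_mul ha] <;> simp [matrixOfRow]
  map_add' x y := ext_row ha (by simp [matrixOfRow]) (by simp [matrixOfRow]) (by simp [matrixOfRow])
  commutes' k := ext_row ha (by simp [matrixOfRow, Matrix.algebraMap_matrix_apply])
    (by simp [matrixOfRow, Matrix.algebraMap_matrix_apply])
    (by simp [matrixOfRow, Matrix.algebraMap_matrix_apply])

theorem diag_row (hσ : ∀ x, σ (σ (σ x)) = x) (ha : σ a = a) (x : L) :
    (diag hσ ha x).1 0 = ![x, 0, 0] := by
  ext j
  fin_cases j <;> simp [diag, matrixOfRow]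

/-- The element `y` of the cyclic algebra `(L/K, σ, a)` with `y ^ 3 = a`. -/
def shift (ha : σ a = a) : cubicCyclicAlgebra σ a :=
  ⟨cubicShift a, by
    rw [mem_iff]
    congr 1
    ext i j
    fin_cases i <;> fin_cases j <;> simp [cubicShift, ha]⟩

theorem shift_row (ha : σ a = a) : (shift ha).1 0 = ![0, 1, 0] := rfl

theorem algebraMap_row (k : K) :
    (algebraMap K (cubicCyclicAlgebra σ a) k).1 0 = ![algebraMap K L k, 0, 0] := by
  ext j
  fin_cases j <;> simp [Matrix.algebraMap_matrix_apply]

theorem shift_mul_diag (hσ : ∀ x, σ (σ (σ x)) = x) (ha : σ a = a) (x : L) :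
    shift ha * diag hσ ha x = diag hσ ha (σ x) * shift ha := by
  apply ext_row ha <;> rw [row_mul ha, row_mul ha, diag_row, diag_row, shift_row] <;> simp

theorem diag_mul_row (hσ : ∀ x, σ (σ (σ x)) = x) (ha : σ a = a) (x : L)
    (M : cubicCyclicAlgebra σ a) (j : Fin 3) : (diag hσ ha x * M).1 0 j = x * M.1 0 j := by
  rw [row_mul ha, diag_row]
  fin_cases j <;> simp

theorem shift_sq_row (ha : σ a = a) : (shift ha ^ 2).1 0 = ![0, 0, 1] := by
  rw [pow_two, row_mul ha, shift_row]
  simp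

theorem shift_pow_three (ha : σ a = a) {k : K} (hk : algebraMap K L k = a) :
    shift ha ^ 3 = algebraMap K _ k := by
  apply ext_row ha <;> rw [pow_succ, row_mul ha, shift_sq_row, shift_row, algebraMap_row] <;>
    simp [hk]

theorem eq_zero_of_diag_mul_shift_pow_mem (hσ : ∀ x, σ (σ (σ x)) = x) (ha : σ a = a) {x : L}
    (hx : x ≠ 0) {c : ℕ} (hc : c < 3)
    (h : diag hσ ha x * shift ha ^ c ∈ (algebraMap K (cubicCyclicAlgebra σ a)).range) : c = 0 := by
  obtain ⟨k, hk⟩ := h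
  have hrow (j : Fin 3) := congrArg (fun M : cubicCyclicAlgebra σ a ↦ M.1 0 j) hk
  simp only [diag_mul_row, algebraMap_row] at hrow
  interval_cases c
  · rfl
  · have := hrow 1
    exact absurd (by simpa [shift_row] using this.symm) hx
  · have := hrow 2
    exact absurd (by simpa [shift_sq_row] using this.symm) hx

theorem center_eq_bot (hσ : ∀ x, σ (σ (σ x)) = x) (ha : σ a = a)
    (hfix : ∀ x, σ x = x → x ∈ (algebraMap K L).range) {t : L} (ht1 : σ t ≠ t)
    (ht2 : σ (σ t) ≠ t) : Subalgebra.center K (cubicCyclicAlgebra σ a) = ⊥ := by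
  refine eq_bot_iff.2 fun M hM ↦ ?_
  rw [Subalgebra.mem_center_iff] at hM
  have h1 (j : Fin 3) := congrArg (fun M : cubicCyclicAlgebra σ a ↦ M.1 0 j) (hM (diag hσ ha t))
  simp only [diag_mul_row] at h1
  have h11 := h1 1
  have h12 := h1 2
  rw [row_mul ha, diag_row] at h11 h12
  have hM1 : M.1 0 1 = 0 := by
    by_contra h
    simp [mul_comm t, h, ht1.symm] at h11
  have hM2 : M.1 0 2 = 0 := by
    by_contra h
    simp [mul_comm t, h, ht2.symm] at h12
  have h2 := congrArg (fun M : cubicCyclicAlgebra σ a ↦ M.1 0 1) (hM (shift ha))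
  simp only [row_mul ha, shift_row] at h2
  simp at h2
  obtain ⟨k, hk⟩ := hfix _ h2
  refine Algebra.mem_bot.2 ⟨k, ext_row ha ?_ ?_ ?_⟩ <;> rw [algebraMap_row] <;> simp [*]

end cubicCyclicAlgebra

/-- The homomorphism from the cyclic group of order `n` that sends the generator to an element `g`
with `g ^ n = 1`. -/
def zmodPowersHom {Q : Type*} [Group Q] (n : ℕ) (g : Q) (hg : g ^ n = 1) :
    Multiplicative (ZMod n) →* Q :=
  AddMonoidHom.toMultiplicativeLeft (ZMod.lift n ⟨zmultiplesHom (Additive Q) (.ofMul g),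
    show Additive.ofMul (g ^ (n : ℤ)) = 0 by rw [zpow_natCast, hg]; rfl⟩)

theorem zmodPowersHom_natCast {Q : Type*} [Group Q] (n : ℕ) (g : Q) (hg : g ^ n = 1) (k : ℕ) :
    zmodPowersHom n g hg (.ofAdd (k : ZMod n)) = g ^ k := by
  have := ZMod.lift_coe n ⟨zmultiplesHom (Additive Q) (.ofMul g),
    show Additive.ofMul (g ^ (n : ℤ)) = 0 by rw [zpow_natCast, hg]; rfl⟩ (k : ℤ)
  rw [Int.cast_natCast] at this
  refine (congrArg Additive.toMul this).trans ?_
  exact zpow_natCast g k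

theorem exists_natCast_ofAdd {n : ℕ} [NeZero n] (x : Multiplicative (ZMod n)) :
    ∃ k < n, x = .ofAdd (k : ZMod n) :=
  ⟨x.toAdd.val, x.toAdd.val_lt, by simp⟩

theorem exists_injective_hom_of_relations {Q : Type*} [Group Q] {n w : ℕ} [NeZero n]
    (χ : Multiplicative (ZMod 3) →* (ZMod n)ˣ)
    (hw : (χ (.ofAdd 1) : ZMod n) = w) {t z y : Q} (ht : t ^ 3 = 1) (hz : z ^ n = 1)
    (hy : y ^ 3 = 1) (htz : Commute t z) (hty : Commute t y) (hyz : y * z = z ^ w * y)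
    (hind : ∀ a b c : ℕ, c < 3 → t ^ a * (z ^ b * y ^ c) = 1 → 3 ∣ a ∧ n ∣ b ∧ c = 0) :
    ∃ f : (Multiplicative (ZMod 3) ×
        (Multiplicative (ZMod n) ⋊[(zmodAction n).comp χ] Multiplicative (ZMod 3))) →* Q,
      Function.Injective f := by
  have hyz' (c b : ℕ) : y ^ c * z ^ b * (y ^ c)⁻¹ = z ^ (w ^ c * b) := by
    have h1 : MulAut.conj y z = z ^ w := by rw [MulAut.conj_apply, hyz, mul_inv_cancel_right]
    induction c with
    | zero => simp
    | succ c ih =>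
      have h2 := congrArg (MulAut.conj y) ih
      rw [map_pow, h1] at h2
      rw [pow_succ' w, mul_assoc w, pow_mul z, ← h2, MulAut.conj_apply, pow_succ' y]
      simp only [mul_inv_rev, mul_assoc]
  have hχ (c : ℕ) : (χ (.ofAdd (c : ZMod 3)) : ZMod n) = (w ^ c : ℕ) := by
    rw [Nat.cast_pow, ← hw, ← Units.val_pow_eq_pow_val, ← map_pow, ← ofAdd_nsmul]
    simp
  let g : Multiplicative (ZMod n) ⋊[(zmodAction n).comp χ] Multiplicative (ZMod 3) →* Q :=
    SemidirectProduct.lift (zmodPowersHom n z hz) (zmodPowersHom 3 y hy) fun c ↦ by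
      obtain ⟨c, -, rfl⟩ := exists_natCast_ofAdd c
      refine MonoidHom.ext fun b ↦ ?_
      obtain ⟨b, -, rfl⟩ := exists_natCast_ofAdd b
      have : ((zmodAction n).comp χ) (.ofAdd (c : ZMod 3)) (.ofAdd (b : ZMod n)) =
          .ofAdd ((w ^ c * b : ℕ) : ZMod n) := by
        rw [Nat.cast_mul, ← hχ]
        rfl
      change zmodPowersHom n z hz (((zmodAction n).comp χ) _ _) =
        MulAut.conj (zmodPowersHom 3 y hy _) (zmodPowersHom n z hz _)
      rw [this, MulAut.conj_apply, zmodPowersHom_natCast, zmodPowersHom_natCast,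
        zmodPowersHom_natCast, hyz']
  have hg (b c : ℕ) : g ⟨.ofAdd (b : ZMod n), .ofAdd (c : ZMod 3)⟩ = z ^ b * y ^ c := by
    rw [← zmodPowersHom_natCast n z hz, ← zmodPowersHom_natCast 3 y hy]
    rfl
  let f := MonoidHom.noncommCoprod (zmodPowersHom 3 t ht) g fun a x ↦ by
    obtain ⟨a, -, rfl⟩ := exists_natCast_ofAdd a
    obtain ⟨b, c⟩ := x
    obtain ⟨b, -, rfl⟩ := exists_natCast_ofAdd b
    obtain ⟨c, -, rfl⟩ := exists_natCast_ofAdd c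
    rw [hg, zmodPowersHom_natCast]
    exact (htz.pow_pow a b).mul_right (hty.pow_pow a c)
  refine ⟨f, (injective_iff_map_eq_one f).2 ?_⟩
  rintro ⟨a, b, c⟩ h
  obtain ⟨a, -, rfl⟩ := exists_natCast_ofAdd a
  obtain ⟨b, -, rfl⟩ := exists_natCast_ofAdd b
  obtain ⟨c, hc3, rfl⟩ := exists_natCast_ofAdd c
  rw [MonoidHom.noncommCoprod_apply, hg, zmodPowersHom_natCast] at h
  obtain ⟨ha, hb, rfl⟩ := hind a b c hc3 h
  rw [(ZMod.natCast_eq_zero_iff a 3).2 ha, (ZMod.natCast_eq_zero_iff b n).2 hb,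
    Nat.cast_zero]
  rfl

theorem mem_centralUnits {K A : Type*} [Field K] [DivisionRing A] [Algebra K A] {u : Aˣ} {k : K}
    (h : (u : A) = algebraMap K A k) : u ∈ centralUnits K A := by
  have hk : k ≠ 0 := by
    rintro rfl
    exact u.ne_zero (by rw [h, map_zero])
  exact ⟨Units.mk0 k hk, Units.ext h.symm⟩

theorem exists_injective_hom_of_cubic_kummer {K A L : Type*} [Field K] [DivisionRing A]
    [Algebra K A] [Field L] [Algebra K L] {σ : Gal(L/K)}
    (hfix : ∀ x, σ x = x → x ∈ (algebraMap K L).range) {t z ω : L}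
    (hω : IsPrimitiveRoot ω 3) (hσω : σ ω = ω) (ht : t ≠ 0) (hσt : σ t = ω * t) {n w : ℕ}
    [NeZero n] (hz : IsPrimitiveRoot z n) (hσz : σ z = z ^ w) (hw0 : 1 ≤ w)
    (hwn : (w - 1).Coprime n) (h3n : Nat.Coprime 3 n)
    (φ : L →ₐ[K] A) {y : A} (hy : y ≠ 0) {a : K} (hya : y ^ 3 = algebraMap K A a)
    (hyφ : ∀ x, y * φ x = φ (σ x) * y)
    (hind : ∀ x ≠ 0, ∀ c < 3, φ x * y ^ c ∈ (algebraMap K A).range → c = 0)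
    (χ : Multiplicative (ZMod 3) →* (ZMod n)ˣ) (hw : (χ (.ofAdd 1) : ZMod n) = w) :
    ∃ f : (Multiplicative (ZMod 3) ×
        (Multiplicative (ZMod n) ⋊[(zmodAction n).comp χ] Multiplicative (ZMod 3))) →*
          Aˣ ⧸ centralUnits K A,
      Function.Injective f := by
  have hz0 : z ≠ 0 := hz.ne_zero (NeZero.ne n)
  have hω0 : ω ≠ 0 := hω.ne_zero (by decide)
  have hφ0 {x : L} (hx : x ≠ 0) : φ x ≠ 0 := (map_ne_zero φ).2 hx
  have hcent {x : L} (hx : σ x = x) (hx0 : x ≠ 0) :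
      (QuotientGroup.mk (Units.mk0 (φ x) (hφ0 hx0)) : Aˣ ⧸ centralUnits K A) = 1 := by
    obtain ⟨k, rfl⟩ := hfix x hx
    exact (QuotientGroup.eq_one_iff _).2 (mem_centralUnits (k := k) (by simp))
  refine exists_injective_hom_of_relations χ hw
    (t := QuotientGroup.mk (Units.mk0 (φ t) (hφ0 ht)))
    (z := QuotientGroup.mk (Units.mk0 (φ z) (hφ0 hz0)))
    (y := QuotientGroup.mk (Units.mk0 y hy)) ?_ ?_ ?_ ?_ ?_ ?_ fun i j c hc h ↦ ?_
  · rw [← hcent (x := t ^ 3) (by rw [map_pow, hσt, mul_pow, hω.pow_eq_one, one_mul])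
      (pow_ne_zero 3 ht), ← QuotientGroup.mk_pow]
    congr 1
    ext
    simp
  · rw [← QuotientGroup.mk_pow, ← QuotientGroup.mk_one]
    congr 1
    ext
    simp [← map_pow, hz.pow_eq_one]
  · rw [← QuotientGroup.mk_pow]
    exact (QuotientGroup.eq_one_iff _).2 (mem_centralUnits (k := a) (by simpa using hya))
  · rw [commute_iff_eq, ← QuotientGroup.mk_mul, ← QuotientGroup.mk_mul]
    congr 1
    ext
    simp [← map_mul, mul_comm]
  · rw [commute_iff_eq, ← one_mul (_ * QuotientGroup.mk (Units.mk0 y hy)), ← hcent hσω hω0,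
      ← QuotientGroup.mk_mul, ← QuotientGroup.mk_mul, ← QuotientGroup.mk_mul]
    congr 1
    ext
    simp [hyφ, hσt, mul_assoc]
  · rw [← QuotientGroup.mk_pow, ← QuotientGroup.mk_mul, ← QuotientGroup.mk_mul]
    congr 1
    ext
    simp [hyφ, hσz]
  · rw [← QuotientGroup.mk_pow, ← QuotientGroup.mk_pow, ← QuotientGroup.mk_pow,
      ← QuotientGroup.mk_mul, ← QuotientGroup.mk_mul, QuotientGroup.eq_one_iff] at h
    obtain ⟨k, hk⟩ := h
    have hk' : algebraMap K A k = φ (t ^ i * z ^ j) * y ^ c := by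
      have := congrArg Units.val hk
      simpa [mul_assoc] using this
    have hx0 : t ^ i * z ^ j ≠ 0 := mul_ne_zero (pow_ne_zero _ ht) (pow_ne_zero _ hz0)
    obtain rfl := hind _ hx0 c hc ⟨k, hk'⟩
    rw [pow_zero, mul_one, ← φ.commutes] at hk'
    have hx : σ (t ^ i * z ^ j) = t ^ i * z ^ j := by rw [← φ.injective hk', σ.commutes]
    obtain ⟨w, rfl⟩ := Nat.exists_eq_add_of_le' hw0
    rw [Nat.add_sub_cancel] at hwn
    have h1 : ω ^ i * z ^ (w * j) = 1 := by
      rw [map_mul, map_pow, map_pow, hσt, hσz] at hx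
      refine mul_right_cancel₀ hx0 ?_
      rw [one_mul]
      refine Eq.trans ?_ hx
      ring
    have h2 : n ∣ j := by
      have h3 : z ^ (3 * (w * j)) = 1 := by
        have := congrArg (· ^ 3) h1
        simp only [mul_pow, one_pow] at this
        rwa [← pow_mul, mul_comm i, pow_mul, hω.pow_eq_one, one_pow, one_mul, ← pow_mul,
          mul_comm _ 3] at this
      exact hwn.symm.dvd_of_dvd_mul_left
        (h3n.symm.dvd_of_dvd_mul_left ((hz.pow_eq_one_iff_dvd _).1 h3))
    refine ⟨(hω.pow_eq_one_iff_dvd i).1 ?_, h2, rfl⟩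
    rwa [(hz.pow_eq_one_iff_dvd _).2 (h2.mul_left w), mul_one] at h1

theorem exists_kummer_generator {L : Type*} [Field L] {F : Type*} [Field F] [Algebra F L]
    {σ : Gal(L/F)} (hσ : ∀ x, σ (σ (σ x)) = x) {ω : L} (hω : IsPrimitiveRoot ω 3) (hσω : σ ω = ω)
    {x : L} (hx : σ x ≠ x) : ∃ t : L, t ≠ 0 ∧ σ t = ω * t := by
  have hω3 : ω ^ 3 = 1 := hω.pow_eq_one
  have hω1 : ω ^ 2 + ω + 1 = 0 := by
    have h1 : ω - 1 ≠ 0 := sub_ne_zero.2 (hω.ne_one (by decide))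
    exact mul_left_cancel₀ h1 (by linear_combination hω3)
  have hσt (y : L) : σ (y + ω ^ 2 * σ y + ω * σ (σ y)) =
      ω * (y + ω ^ 2 * σ y + ω * σ (σ y)) := by
    simp only [map_add, map_mul, map_pow, hσω, hσ]
    linear_combination -σ y * hω3
  by_contra! h
  have h1 : x + ω ^ 2 * σ x + ω * σ (σ x) = 0 := by
    by_contra h0
    exact h _ h0 (hσt x)
  have h2 : x ^ 2 + ω ^ 2 * σ (x ^ 2) + ω * σ (σ (x ^ 2)) = 0 := by
    by_contra h0
    exact h _ h0 (hσt (x ^ 2))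
  rw [map_pow, map_pow] at h2
  have h3 : (x - σ (σ x)) * (x - σ x) = 0 := by
    linear_combination h2 - (σ x + σ (σ x)) * h1 + σ x * σ (σ x) * hω1
  rcases mul_eq_zero.1 h3 with h4 | h4
  · refine hx ?_
    conv_rhs => rw [← hσ x]
    rw [← sub_eq_zero.1 h4]
  · exact hx (sub_eq_zero.1 h4).symm

theorem exists_centralDivAlg_of_prime {n m q : ℕ} [NeZero n] (hm : 1 < m) (hnm : n ∣ m)
    (h3m : Nat.Coprime 3 m) (hq : q.Prime) (hq3 : q ≡ 1 [MOD 3]) (hqm : q ^ 3 ≡ 1 [MOD m])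
    (hqm1 : (q - 1).Coprime m) (χ : Multiplicative (ZMod 3) →* (ZMod n)ˣ)
    (hχ : (χ (.ofAdd 1) : ZMod n) = q) :
    ∃ (D : CentralDivAlg)
      (f : (Multiplicative (ZMod 3) ×
        (Multiplicative (ZMod n) ⋊[(zmodAction n).comp χ] Multiplicative (ZMod 3))) →* D.Q),
      Function.Injective f := by
  have : NeZero m := ⟨by lia⟩
  have : NeZero (3 * m) := ⟨by lia⟩
  obtain ⟨L, _, _, _⟩ : ∃ (L : Type) (_ : Field L) (_ : NumberField L),
      IsCyclotomicExtension {3 * m} ℚ L :=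
    ⟨CyclotomicField (3 * m) ℚ, inferInstance, inferInstance,
      CyclotomicField.isCyclotomicExtension (3 * m) ℚ⟩
  have hqN : q ^ 3 ≡ 1 [MOD 3 * m] :=
    (Nat.modEq_and_modEq_iff_modEq_mul h3m).1 ⟨by simpa using hq3.pow 3, hqm⟩
  have hqd : ¬ q ∣ 3 * m := by
    intro h
    have h1 : q ∣ 1 := (hqN.of_dvd h).dvd_iff dvd_rfl |>.1 (dvd_pow_self q (by decide))
    exact hq.one_lt.ne' (Nat.dvd_one.1 h1)
  obtain ⟨σ, v, hv, hvq, hσ⟩ := exists_frobenius_and_valuation L (3 * m) q hq hqd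
  have hη := IsCyclotomicExtension.zeta_spec (3 * m) ℚ L
  set η := IsCyclotomicExtension.zeta (3 * m) ℚ L
  have hω : IsPrimitiveRoot (η ^ m) 3 := hη.pow (NeZero.pos _) (mul_comm _ _)
  have hζ : IsPrimitiveRoot (η ^ 3) m := hη.pow (NeZero.pos _) rfl
  have hση : σ η = η ^ q := hσ η hη.pow_eq_one
  have hσω : σ (η ^ m) = η ^ m := by
    rw [map_pow, hση, ← pow_mul, mul_comm q m, pow_mul, pow_eq_pow_mod q hω.pow_eq_one, hq3, pow_one]
  have hσ1 : σ (η ^ 3) ≠ η ^ 3 := by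
    rw [map_pow, hση, ← pow_mul, mul_comm q 3, pow_mul]
    intro h
    have h1 : (η ^ 3) ^ (q - 1) = 1 := by
      refine mul_right_cancel₀ (hζ.ne_zero (NeZero.ne m)) ?_
      rw [← pow_succ, Nat.sub_add_cancel hq.one_le, h, one_mul]
    have h2 := (hζ.pow_eq_one_iff_dvd _).1 h1
    exact hm.ne' (hqm1.symm.eq_one_of_dvd h2)
  have hσ3 : σ ^ 3 = 1 := by
    refine AlgEquiv.coe_toAlgHom_injective ((hη.powerBasis ℚ).algHom_ext (S' := L) ?_)
    rw [IsPrimitiveRoot.powerBasis_gen]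
    change σ (σ (σ η)) = η
    rw [hση, map_pow, map_pow, hση, map_pow, hση, ← pow_mul, ← pow_mul, ← pow_two, ← pow_succ',
      pow_eq_pow_mod _ hη.pow_eq_one, hqN, ← pow_eq_pow_mod _ hη.pow_eq_one, pow_one]
  let K := IntermediateField.fixedField (Subgroup.zpowers σ)
  let τ : Gal(L/K) := AlgEquiv.ofRingEquiv (f := (σ : L ≃+* L)) fun x ↦
    x.2 ⟨σ, Subgroup.mem_zpowers σ⟩
  have hτ (x : L) : τ x = σ x := rfl
  have hτ3 (x : L) : τ (τ (τ x)) = x := DFunLike.congr_fun hσ3 x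
  have hfix (x : L) (hx : τ x = x) : x ∈ (algebraMap K L).range := by
    refine ⟨⟨x, ?_⟩, rfl⟩
    rintro ⟨g, hg⟩
    have : Subgroup.zpowers σ ≤ MulAction.stabilizer Gal(L/ℚ) x :=
      Subgroup.zpowers_le.2 (MulAction.mem_stabilizer_iff.2 hx)
    exact this hg
  have hrank : Module.finrank K L = 3 := by
    rw [IntermediateField.finrank_fixedField_eq_card, Nat.card_zpowers]
    have : Fact (Nat.Prime 3) := ⟨Nat.prime_three⟩
    refine orderOf_eq_prime hσ3 ?_
    rintro rfl
    exact hσ1 rfl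
  obtain ⟨t, ht0, ht⟩ := exists_kummer_generator hτ3 hω hσω hσ1
  have hq' : τ (q : L) = q := map_natCast τ q
  have hdom := cubicCyclicAlgebra.noZeroDivisors_of_valuation hq' v hv hvq
  have hrank9 := cubicCyclicAlgebra.finrank_eq_nine hτ3 hq' hrank
  have : FiniteDimensional K (cubicCyclicAlgebra τ (q : L)) :=
    Module.finite_of_finrank_pos (by rw [hrank9]; decide)
  have : IsDomain (cubicCyclicAlgebra τ (q : L)) := NoZeroDivisors.to_isDomain _
  have hω1 : η ^ m ≠ 1 := hω.ne_one (by decide)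
  let _ := divisionRingOfFiniteDimensional K (cubicCyclicAlgebra τ (q : L))
  have hcenter := cubicCyclicAlgebra.center_eq_bot hτ3 hq' hfix (t := t)
    (by rw [ht]; simpa [ht0] using hω1)
    (by
      have h2 : (η ^ m) ^ 2 ≠ 1 := hω.pow_ne_one_of_pos_of_lt (by decide) (by decide)
      rw [ht, map_mul, ht, show τ (η ^ m) = η ^ m from hσω, ← mul_assoc, ← pow_two]
      simpa [ht0] using h2)
  let D : CentralDivAlg :=
    { K := K
      A := cubicCyclicAlgebra τ (q : L)
      center_eq_bot := hcenter
      finrank_eq_nine := hrank9 }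
  refine ⟨D, ?_⟩
  obtain ⟨d, rfl⟩ := hnm
  have hd : 0 < d := Nat.pos_of_ne_zero (by rintro rfl; simp at hm)
  have hz : IsPrimitiveRoot ((η ^ 3) ^ d) n := hζ.pow (NeZero.pos _) (mul_comm _ _)
  have hy0 : (cubicCyclicAlgebra.shift hq' : cubicCyclicAlgebra τ (q : L)) ≠ 0 := by
    intro h
    have := congrArg (fun M : cubicCyclicAlgebra τ (q : L) ↦ M.1 0 1) h
    simp [cubicCyclicAlgebra.shift_row] at this
  exact exists_injective_hom_of_cubic_kummer (A := cubicCyclicAlgebra τ (q : L)) hfix hω hσω ht0 ht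
    hz (w := q) (by
      rw [map_pow, map_pow, hτ, hση]
      simp only [← pow_mul]
      congr 1
      ring)
    hq.one_le hqm1.coprime_mul_right_right h3m.coprime_mul_right_right
    (cubicCyclicAlgebra.diag hτ3 hq') hy0
    (cubicCyclicAlgebra.shift_pow_three hq' (k := (q : K)) (map_natCast _ q))
    (cubicCyclicAlgebra.shift_mul_diag hτ3 hq')
    (fun x hx c hc ↦ cubicCyclicAlgebra.eq_zero_of_diag_mul_shift_pow_mem hτ3 hq' hx hc) χ hχ

theorem exists_prime_of_modulus {m w : ℕ} (hm : m ≠ 0) (h3m : Nat.Coprime 3 m)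
    (hw : w ^ 3 ≡ 1 [MOD m]) : ∃ q : ℕ, q.Prime ∧ q ≡ 1 [MOD 3] ∧ q ≡ w [MOD m] := by
  have : NeZero (3 * m) := ⟨by lia⟩
  obtain ⟨r, hr3, hrm⟩ := Nat.chineseRemainder h3m 1 w
  have hr : r ^ 3 ≡ 1 [MOD 3 * m] :=
    (Nat.modEq_and_modEq_iff_modEq_mul h3m).1 ⟨by simpa using hr3.pow 3, (hrm.pow 3).trans hw⟩
  have hu : IsUnit (r : ZMod (3 * m)) := by
    refine IsUnit.of_pow_eq_one (n := 3) ?_ (by decide)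
    exact_mod_cast (ZMod.natCast_eq_natCast_iff _ _ _).2 hr
  obtain ⟨q, -, hq, hqr⟩ := Nat.forall_exists_prime_gt_and_eq_mod hu 0
  rw [ZMod.natCast_eq_natCast_iff] at hqr
  exact ⟨q, hq, (hqr.of_mul_right m).trans hr3, (hqr.of_mul_left 3).trans hrm⟩

theorem pow_three_modEq_one {n w : ℕ} {χ : Multiplicative (ZMod 3) →* (ZMod n)ˣ}
    (hw : (χ (.ofAdd 1) : ZMod n) = w) : w ^ 3 ≡ 1 [MOD n] := by
  rw [← ZMod.natCast_eq_natCast_iff, Nat.cast_pow, ← hw, ← Units.val_pow_eq_pow_val, ← map_pow,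
    ← ofAdd_nsmul, show (3 • 1 : ZMod 3) = 0 from rfl, ofAdd_zero, map_one, Units.val_one,
    Nat.cast_one]

theorem IsBalanced.coprime_sub_one {n w : ℕ} [NeZero n]
    (hdiv : ∀ p : ℕ, p.Prime → p ∣ n → p % 3 = 1) {χ : Multiplicative (ZMod 3) →* (ZMod n)ˣ}
    (hχ : IsBalanced n χ) (hw : (χ (.ofAdd 1) : ZMod n) = w) (hw1 : 1 ≤ w) :
    (w - 1).Coprime n := by
  refine Nat.coprime_of_dvd fun p hp hpw hpn ↦ ?_
  have hw3 := (pow_three_modEq_one hw).of_dvd (Nat.ordProj_dvd n p)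
  obtain ⟨w, rfl⟩ := Nat.exists_eq_add_of_le' hw1
  rw [Nat.add_sub_cancel] at hpw
  have h1 : p ^ n.factorization p ∣ w * (w ^ 2 + 3 * w + 3) := by
    have := (Nat.modEq_iff_dvd' (Nat.one_le_pow _ _ hw1)).1 hw3.symm
    rwa [show (w + 1) ^ 3 = w * (w ^ 2 + 3 * w + 3) + 1 by ring, Nat.add_sub_cancel] at this
  have h2 : Nat.Coprime p (w ^ 2 + 3 * w + 3) := by
    rw [hp.coprime_iff_not_dvd]
    intro h
    have h3 : p ∣ 3 := (Nat.dvd_add_right ((hpw.mul_left w).add (hpw.mul_left 3))).1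
      (by rwa [← pow_two])
    have := hdiv p hp hpn
    rw [(Nat.prime_dvd_prime_iff_eq hp Nat.prime_three).1 h3] at this
    exact absurd this (by decide)
  have h4 : p ^ n.factorization p ∣ w := (h2.pow_left _).dvd_of_dvd_mul_right h1
  have h5 : (Multiplicative.ofAdd 1 : Multiplicative (ZMod 3)) = 1 := by
    refine hχ p hp hpn (Eq.trans (Units.ext ?_) (MonoidHom.map_one _).symm)
    change ZMod.castHom (Nat.ordProj_dvd n p) (ZMod (p ^ n.factorization p)) (χ (.ofAdd 1) : ZMod n) = 1
    rw [hw, map_natCast, Nat.cast_add, (ZMod.natCast_eq_zero_iff _ _).2 h4, zero_add, Nat.cast_one]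
  exact absurd h5 (by decide)

/-- Let `n ≥ 1` be an integer divisible only by primes congruent to `1` modulo `3`, let
`G' = μ_n ⋊_χ μ₃` be a balanced semidirect product, and let `G = μ₃ × G'`. Then there exist
a number field `K` and a central division algebra `A` of dimension `9` over `K` such that
the quotient group `Aˣ/Kˣ` contains a subgroup isomorphic to `G`. -/
theorem stmt_8 (n : ℕ) (hn : 1 ≤ n) (hdiv : ∀ p : ℕ, p.Prime → p ∣ n → p % 3 = 1)
    (χ : Multiplicative (ZMod 3) →* (ZMod n)ˣ) (hχ : IsBalanced n χ) :
    ∃ (D : CentralDivAlg)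
      (f : (Multiplicative (ZMod 3) ×
        (Multiplicative (ZMod n) ⋊[(zmodAction n).comp χ] Multiplicative (ZMod 3))) →* D.Q),
      Function.Injective f := by
  have : NeZero n := ⟨by lia⟩
  obtain ⟨w, hw⟩ : ∃ w : ℕ, (χ (.ofAdd 1) : ZMod n) = w := ⟨_, (ZMod.natCast_zmod_val _).symm⟩
  rcases hn.eq_or_lt with rfl | hn1
  · obtain ⟨q, hq, hq3, hq7⟩ := exists_prime_of_modulus (m := 7) (w := 2) (by decide) (by decide)
      (by decide)
    refine exists_centralDivAlg_of_prime (m := 7) (q := q) (by decide) (one_dvd 7) (by decide) hq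
      hq3 ((hq7.pow 3).trans (by decide)) ?_ χ (Subsingleton.elim _ _)
    refine ((Nat.Prime.coprime_iff_not_dvd (by decide)).2 fun h ↦ ?_).symm
    have := (Nat.modEq_iff_dvd' hq.one_le).2 h
    exact absurd (this.trans hq7) (by decide)
  · have h3n : Nat.Coprime 3 n := (Nat.Prime.coprime_iff_not_dvd Nat.prime_three).2 fun h ↦
      absurd (hdiv 3 Nat.prime_three h) (by decide)
    obtain ⟨q, hq, hq3, hqn⟩ := exists_prime_of_modulus (NeZero.ne n) h3n (pow_three_modEq_one hw)
    rw [← (ZMod.natCast_eq_natCast_iff _ _ _).2 hqn] at hw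
    exact exists_centralDivAlg_of_prime hn1 dvd_rfl h3n hq hq3 (pow_three_modEq_one hw)
      (hχ.coprime_sub_one hdiv hw hq.one_le) χ hw
end

section
/- Let p ≠ 3 be a prime number, let K be a field of characteristic zero, and let A be an associative unital K-algebra which is a division ring with center equal to K and of dimension 9 over K. Then the group Aˣ/Kˣ contains no subgroup isomorphic to μ_p × μ_p; that is, there is no injective group homomorphism from (ℤ/pℤ) × (ℤ/pℤ) into Aˣ/Kˣ. (Equivalently, every finite abelian p-group with p ≠ 3 acting faithfully by automorphisms on a non-trivial Severi–Brauer surface over K is cyclic.) -/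
theorem mem_centralUnits_iff {K A : Type*} [Field K] [DivisionRing A] [Algebra K A] {x : Aˣ} :
    x ∈ centralUnits K A ↔ ∃ k : Kˣ, (x : A) = algebraMap K A k := by
  constructor
  · rintro ⟨k, rfl⟩
    exact ⟨k, rfl⟩
  · rintro ⟨k, hk⟩
    exact ⟨k, Units.ext hk.symm⟩

open scoped IsMulCommutative in
/-- In a ring without zero divisors, a `p`-th root of unity (`p` prime) that commutes with a
nontrivial `p`-th root of unity `ζ` is a power of `ζ`. -/
theorem exists_pow_eq_of_commute_of_pow_eq_one {A : Type*} [Ring A] [IsDomain A] {p : ℕ}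
    [Fact p.Prime] {ζ ξ : A} (hζ : ζ ^ p = 1) (hζ1 : ζ ≠ 1) (hξ : ξ ^ p = 1)
    (h : Commute ζ ξ) : ∃ i, ζ ^ i = ξ := by
  have hcomm : ∀ a ∈ ({ζ, ξ} : Set A), ∀ b ∈ ({ζ, ξ} : Set A), a * b = b * a := by
    rintro a (rfl | rfl) b (rfl | rfl)
    exacts [rfl, h, h.symm, rfl]
  let S := Algebra.adjoin ℤ ({ζ, ξ} : Set A)
  have : IsMulCommutative S := Algebra.isMulCommutative_adjoin ℤ hcomm
  let z : S := ⟨ζ, Algebra.subset_adjoin (by simp)⟩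
  let w : S := ⟨ξ, Algebra.subset_adjoin (by simp)⟩
  have hz : IsPrimitiveRoot z p := by
    rw [← orderOf_eq_prime (x := z) (Subtype.ext hζ) fun h1 => hζ1 (congrArg Subtype.val h1)]
    exact IsPrimitiveRoot.orderOf z
  obtain ⟨i, -, hi⟩ := hz.eq_pow_of_pow_eq_one (ξ := w) (Subtype.ext hξ)
  exact ⟨i, congrArg Subtype.val hi⟩

section

variable {K A : Type*} [Field K] [DivisionRing A] [Algebra K A] {p : ℕ}

/-- If `p` is coprime to `[A : K]`, every `p`-torsion element of `Aˣ/Kˣ` lifts to a `p`-torsion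
element of `Aˣ`. -/
theorem exists_lift_pow_eq_one (hp : p.Coprime (Module.finrank K A))
    (g : Aˣ ⧸ centralUnits K A) (hg : g ^ p = 1) :
    ∃ x : Aˣ, (x : Aˣ ⧸ centralUnits K A) = g ∧ x ^ p = 1 := by
  obtain ⟨x, rfl⟩ := QuotientGroup.mk_surjective g
  rw [← QuotientGroup.mk_pow, QuotientGroup.eq_one_iff, mem_centralUnits_iff] at hg
  obtain ⟨a, ha⟩ := hg
  have hnorm : Units.map (Algebra.norm K) x ^ p = a ^ Module.finrank K A := by
    ext
    simpa [Algebra.norm_algebraMap] using congrArg (Algebra.norm K) ha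
  obtain ⟨b, rfl⟩ : ∃ b : Kˣ, b ^ p = a := by
    refine ⟨a ^ p.gcdA (Module.finrank K A) *
      Units.map (Algebra.norm K) x ^ p.gcdB (Module.finrank K A), ?_⟩
    have hbez := Nat.gcd_eq_gcd_ab p (Module.finrank K A)
    rw [hp.gcd_eq_one] at hbez
    calc _ = (a ^ (p : ℤ)) ^ p.gcdA (Module.finrank K A) *
          (Units.map (Algebra.norm K) x ^ p) ^ p.gcdB (Module.finrank K A) := by
            rw [mul_pow, ← zpow_natCast, ← zpow_natCast, ← zpow_natCast, zpow_comm,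
              zpow_comm (Units.map _ x)]
      _ = a ^ (1 : ℤ) := by
            rw [hnorm, ← zpow_natCast, ← zpow_mul, ← zpow_mul, ← zpow_add, ← hbez]
            rfl
      _ = a := zpow_one a
  let c : Aˣ := Units.map (algebraMap K A).toMonoidHom b
  have hc : Commute x c := Units.ext (Algebra.commutes (b : K) (x : A)).symm
  have hxc : x ^ p = c ^ p := by
    ext
    simpa [c] using ha
  refine ⟨x * c⁻¹, ?_, ?_⟩
  · rw [QuotientGroup.mk_mul_of_mem]
    exact inv_mem ⟨b, rfl⟩
  · rw [hc.inv_right.mul_pow, hxc, inv_pow, mul_inv_cancel]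

/-- If `p` is coprime to `[A : K]`, two units whose classes in `Aˣ/Kˣ` commute, one of which is
`p`-torsion, commute. -/
theorem commute_of_commute_mk (hp : p.Coprime (Module.finrank K A)) {x y : Aˣ} (hy : y ^ p = 1)
    (h : Commute (x : Aˣ ⧸ centralUnits K A) y) : Commute x y := by
  have hmem : x * y * x⁻¹ * y⁻¹ ∈ centralUnits K A := by
    rw [← QuotientGroup.eq_one_iff]
    simp only [QuotientGroup.mk_mul, QuotientGroup.mk_inv]
    rw [h.eq, mul_inv_cancel_right, mul_inv_cancel]
  obtain ⟨c, hc⟩ := hmem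
  have hconj : x * y * x⁻¹ = Units.map (algebraMap K A).toMonoidHom c * y := by
    rw [hc, inv_mul_cancel_right]
  have hcy : Commute (Units.map (algebraMap K A).toMonoidHom c) y :=
    Units.ext (Algebra.commutes (c : K) (y : A))
  have hinj : Function.Injective (Units.map (algebraMap K A).toMonoidHom) :=
    Units.map_injective (algebraMap K A).injective
  have hcp : c ^ p = 1 := by
    apply hinj
    have := congrArg (· ^ p) hconj
    simpa only [conj_pow, hcy.mul_pow, hy, mul_one, mul_inv_cancel, map_pow, map_one, eq_comm]
      using this
  have hcn : c ^ Module.finrank K A = 1 := by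
    have := congrArg (Units.map (Algebra.norm K)) hc
    simp only [map_mul, map_inv, mul_inv_cancel_comm, mul_inv_cancel] at this
    ext
    simpa [Algebra.norm_algebraMap] using congrArg Units.val this
  have hc1 : c = 1 := by
    rw [← orderOf_eq_one_iff]
    exact Nat.eq_one_of_dvd_coprimes hp (orderOf_dvd_of_pow_eq_one hcp)
      (orderOf_dvd_of_pow_eq_one hcn)
  rw [hc1, map_one, one_mul] at hconj
  exact mul_inv_eq_iff_eq_mul.mp hconj

end

/-- Let `p ≠ 3` be a prime, `K` a field of characteristic zero, and `A` a central division
algebra of dimension `9` over `K`. Then the group `Aˣ/Kˣ` (the automorphism group of the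
non-trivial Severi–Brauer surface corresponding to `A`) contains no subgroup isomorphic to
`μ_p × μ_p`: there is no injective group homomorphism `(ℤ/pℤ) × (ℤ/pℤ) → Aˣ/Kˣ`. -/
theorem stmt_14 (p : ℕ) (hp : p.Prime) (hp3 : p ≠ 3)
    (K : Type) [Field K] [CharZero K]
    (A : Type) [DivisionRing A] [Algebra K A]
    (hcenter : Subalgebra.center K A = ⊥) (hrank : Module.finrank K A = 9) :
    ∀ f : Multiplicative (ZMod p × ZMod p) →* (Aˣ ⧸ centralUnits K A),
      ¬ Function.Injective f := by
  intro f hf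
  have : Fact p.Prime := ⟨hp⟩
  have hcop : p.Coprime (Module.finrank K A) := by
    rw [hrank]
    exact ((Nat.coprime_primes hp Nat.prime_three).mpr hp3).pow_right 2
  have htors (g : Multiplicative (ZMod p × ZMod p)) : f g ^ p = 1 := by
    rw [← map_pow, show g ^ p = 1 from ?_, map_one]
    apply Multiplicative.toAdd.injective
    ext <;> simp
  let a : Multiplicative (ZMod p × ZMod p) := .ofAdd (1, 0)
  let b : Multiplicative (ZMod p × ZMod p) := .ofAdd (0, 1)
  obtain ⟨x, hx, hxp⟩ := exists_lift_pow_eq_one hcop (f a) (htors a)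
  obtain ⟨y, hy, hyp⟩ := exists_lift_pow_eq_one hcop (f b) (htors b)
  have hxy : Commute x y := by
    apply commute_of_commute_mk hcop hyp
    rw [hx, hy]
    exact (Commute.all a b).map f
  have hx1 : x ≠ 1 := by
    rintro rfl
    have : a = 1 := hf (by rw [← hx, map_one, QuotientGroup.mk_one])
    exact one_ne_zero (congrArg (fun g => g.toAdd.1) this)
  obtain ⟨i, hi⟩ := exists_pow_eq_of_commute_of_pow_eq_one (ζ := (x : A)) (ξ := (y : A))
    (by rw [← Units.val_pow_eq_pow_val, hxp, Units.val_one]) (Units.val_eq_one.not.mpr hx1)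
    (by rw [← Units.val_pow_eq_pow_val, hyp, Units.val_one]) (Units.ext_iff.mp hxy)
  have hab : a ^ i = b := hf <| by
    rw [map_pow, ← hx, ← hy, ← QuotientGroup.mk_pow]
    exact congrArg _ (Units.ext hi)
  have := congrArg (fun g => g.toAdd.2) hab
  simp [a, b] at this
end
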